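/- Let X̂ be the (n+1)×n generic matrix, Y the generic n×1 column over a field K, and J = I_1(X̂Y). Then projdim_{R̂}(R̂/J) = n+1 and dim(R̂/J) ≥ n² + n, hence depth(R̂/J) = n² + n − 1 < dim(R̂/J), so R̂/J is not Cohen–Macaulay. -/

import Mathlib

open MvPolynomial Matrix

/-- `β` is the sequence of total Betti numbers of `M`: there is a free resolution
`⋯ → R^(β 1) → R^(β 0) → M → 0` which is minimal in the sense that all differentials
have image inside `m` times the ambient free module. -/
def IsMinimalFreeRes {R : Type*} [CommRing R] (m : Ideal R)
    (M : Type*) [AddCommGroup M] [Module R M] (β : ℕ → ℕ) : Prop :=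
  ∃ (f : (i : ℕ) → ((Fin (β (i + 1)) → R) →ₗ[R] (Fin (β i) → R)))
    (ε : (Fin (β 0) → R) →ₗ[R] M),
      Function.Surjective ε ∧
      LinearMap.ker ε = LinearMap.range (f 0) ∧
      (∀ i, LinearMap.ker (f i) = LinearMap.range (f (i + 1))) ∧
      (∀ i, LinearMap.range (f i) ≤ m • (⊤ : Submodule R (Fin (β i) → R)))

/-- The depth of a module `M` with respect to an ideal `m`: the supremum of the lengths
of `M`-regular sequences consisting of elements of `m`. -/
noncomputable def moduleDepth {R : Type*} [CommRing R] (m : Ideal R)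
    (M : Type*) [AddCommGroup M] [Module R M] : ℕ∞ :=
  sSup {k : ℕ∞ | ∃ rs : List R, (rs.length : ℕ∞) = k ∧ (∀ r ∈ rs, r ∈ m) ∧
    RingTheory.Sequence.IsWeaklyRegular M rs}


open MvPolynomial Matrix

namespace RJ

section hom
variable {σ K : Type*} [Field K]

lemma hc_mul (s f : MvPolynomial σ K) (e : ℕ) :
    homogeneousComponent e (s * f) =
      ∑ p ∈ Finset.HasAntidiagonal.antidiagonal e, homogeneousComponent p.1 s * homogeneousComponent p.2 f := by
  classical
  ext d
  rw [coeff_homogeneousComponent, coeff_sum]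
  simp only [coeff_mul, coeff_homogeneousComponent]
  rw [Finset.sum_comm]
  split_ifs with h
  · refine Finset.sum_congr rfl fun p hp => ?_
    rw [Finset.HasAntidiagonal.mem_antidiagonal] at hp
    rw [Finset.sum_eq_single (p.1.degree, p.2.degree)]
    · simp
    · rintro ⟨a, b⟩ _ hne
      by_cases h1 : p.1.degree = a
      · by_cases h2 : p.2.degree = b
        · exact absurd (by rw [h1, h2]) hne
        · simp [h2]
      · simp [h1]
    · intro hh
      exfalso; apply hh
      rw [Finset.HasAntidiagonal.mem_antidiagonal, ← h, ← hp]
      simp [map_add]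
  · symm
    refine Finset.sum_eq_zero fun p hp => Finset.sum_eq_zero fun q hq => ?_
    rw [Finset.HasAntidiagonal.mem_antidiagonal] at hp hq
    by_cases h1 : p.1.degree = q.1
    · by_cases h2 : p.2.degree = q.2
      · exact absurd (by rw [← hp, ← hq, map_add, h1, h2]) h
      · simp [h2]
    · simp [h1]

/-- homogeneous ideal -/
def Hom (I : Ideal (MvPolynomial σ K)) : Prop := ∀ f ∈ I, ∀ d, homogeneousComponent d f ∈ I

lemma mem_of_hc (I : Ideal (MvPolynomial σ K)) (f) (h : ∀ d, homogeneousComponent d f ∈ I) :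
    f ∈ I := by
  rw [← sum_homogeneousComponent f]
  exact Ideal.sum_mem _ fun i _ => h i

lemma Hom.span (S : Set (MvPolynomial σ K)) (h : ∀ f ∈ S, ∃ d, f.IsHomogeneous d) :
    Hom (Ideal.span S) := by
  intro f hf
  induction hf using Submodule.span_induction with
  | mem x hx =>
    intro d
    obtain ⟨e, he⟩ := h x hx
    rw [homogeneousComponent_of_mem he]
    split_ifs
    · exact Ideal.subset_span hx
    · exact zero_mem _
  | zero => intro d; simp
  | add x y _ _ hx hy => intro d; rw [map_add]; exact add_mem (hx d) (hy d)
  | smul a x _ hx =>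
    intro d
    rw [smul_eq_mul, hc_mul]
    exact Ideal.sum_mem _ fun p _ => Ideal.mul_mem_left _ _ (hx _)

lemma Hom.sup {I J : Ideal (MvPolynomial σ K)} (hI : Hom I) (hJ : Hom J) : Hom (I ⊔ J) := by
  intro f hf d
  obtain ⟨a, ha, b, hb, rfl⟩ := Submodule.mem_sup.1 hf
  rw [map_add]
  exact Submodule.add_mem_sup (hI a ha d) (hJ b hb d)

lemma Hom.bot : Hom (⊥ : Ideal (MvPolynomial σ K)) := by
  intro f hf d
  rw [Ideal.mem_bot] at hf
  simp [hf]

lemma Hom.single {f : MvPolynomial σ K} (h : ∃ d, f.IsHomogeneous d) : Hom (Ideal.span {f}) :=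
  Hom.span _ (by rintro _ rfl; exact h)

lemma Hom.of_unit {I : Ideal (MvPolynomial σ K)} (hI : Hom I) (s f : MvPolynomial σ K)
    (hs : constantCoeff s ≠ 0) (h : s * f ∈ I) : f ∈ I := by
  apply mem_of_hc
  intro d
  induction d using Nat.strong_induction_on with
  | _ d ih =>
    have h1 := hI _ h d
    rw [hc_mul, ← Finset.add_sum_erase _ _ (a := (0, d)) (by simp)] at h1
    have h2 : ∑ p ∈ (Finset.HasAntidiagonal.antidiagonal d).erase (0, d),
        homogeneousComponent p.1 s * homogeneousComponent p.2 f ∈ I := by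
      refine Ideal.sum_mem _ fun p hp => Ideal.mul_mem_left _ _ (ih _ ?_)
      rw [Finset.mem_erase, Finset.HasAntidiagonal.mem_antidiagonal] at hp
      rcases p with ⟨a, b⟩
      simp only [ne_eq, Prod.mk.injEq, not_and] at hp
      omega
    have h3 := (Submodule.add_mem_iff_left _ h2).1 h1
    simp only [homogeneousComponent_zero] at h3
    have h4 := Ideal.mul_mem_left I (C (coeff 0 s)⁻¹) h3
    rw [← mul_assoc, ← C_mul, inv_mul_cancel₀ (show coeff 0 s ≠ 0 from hs), C_1, one_mul] at h4
    exact h4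

variable [Finite σ]

lemma nak {I L : Ideal (MvPolynomial σ K)} (hI : Hom I) (θ : MvPolynomial σ K)
    (hθ : constantCoeff θ = 0) (h : ∀ f ∈ L, ∃ g ∈ L, f - θ * g ∈ I) : L ≤ I := by
  have hfg : (L.map (Ideal.Quotient.mk I)).FG := IsNoetherian.noetherian _
  have key := Submodule.exists_sub_one_mem_and_smul_eq_zero_of_fg_of_le_smul
    (Ideal.span {Ideal.Quotient.mk I θ}) (L.map (Ideal.Quotient.mk I)) hfg (by
      rw [Ideal.map, Ideal.span_le]
      rintro _ ⟨f, hf, rfl⟩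
      obtain ⟨g, hg, hfg⟩ := h f hf
      have : Ideal.Quotient.mk I f = Ideal.Quotient.mk I θ * Ideal.Quotient.mk I g := by
        rw [← map_mul]; exact Ideal.Quotient.eq.2 hfg
      rw [this]
      exact Ideal.mul_mem_mul (Ideal.mem_span_singleton_self _) (Ideal.mem_map_of_mem _ hg))
  obtain ⟨r, hr, hr0⟩ := key
  obtain ⟨s, hs⟩ := Ideal.mem_span_singleton'.1 hr
  obtain ⟨s, rfl⟩ := Ideal.Quotient.mk_surjective s
  have hr' : r = Ideal.Quotient.mk I (1 + s * θ) := by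
    rw [map_add, map_mul, hs, map_one]; ring
  intro f hf
  apply hI.of_unit (1 + s * θ) f (by simp [hθ])
  have := hr0 _ (Ideal.mem_map_of_mem _ hf)
  rw [hr', smul_eq_mul, ← map_mul] at this
  exact Ideal.Quotient.eq_zero_iff_mem.1 this

end hom

section wr
variable {R : Type*} [CommRing R]

/-- weakly regular sequence on `R ⧸ I` -/
def WR (I : Ideal R) : List R → Prop
  | [] => True
  | r :: rs => (∀ f, r * f ∈ I → f ∈ I) ∧ WR (I ⊔ Ideal.span {r}) rs

lemma WR.iff (rs : List R) : ∀ I : Ideal R,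
    WR I rs ↔ RingTheory.Sequence.IsWeaklyRegular (R ⧸ I) rs := by
  induction rs with
  | nil => intro I; simp [WR]
  | cons r rs ih =>
    intro I
    rw [WR, RingTheory.Sequence.isWeaklyRegular_cons_iff, ih]
    refine and_congr ?_ ?_
    · rw [isSMulRegular_iff_right_eq_zero_of_smul]
      constructor
      · intro h x hx
        obtain ⟨x, rfl⟩ := Ideal.Quotient.mk_surjective x
        rw [Ideal.Quotient.eq_zero_iff_mem]
        apply h
        rw [← Ideal.Quotient.eq_zero_iff_mem]
        exact hx
      · intro h f hf
        rw [← Ideal.Quotient.eq_zero_iff_mem]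
        apply h
        rw [← Ideal.Quotient.eq_zero_iff_mem] at hf
        exact hf
    · have e : (QuotSMulTop r (R ⧸ I)) ≃ₗ[R] R ⧸ (I ⊔ Ideal.span {r}) :=
        (Submodule.quotEquivOfEq _ _ (by
          ext x
          obtain ⟨x, rfl⟩ := Ideal.Quotient.mk_surjective x
          rw [Submodule.mem_smul_pointwise_iff_exists, Submodule.mem_map]
          constructor
          · rintro ⟨b, -, hb⟩
            obtain ⟨b, rfl⟩ := Ideal.Quotient.mk_surjective b
            exact ⟨r * b, Ideal.mul_mem_right _ _ (Ideal.mem_span_singleton_self r), hb⟩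
          · rintro ⟨b, hb, hb'⟩
            obtain ⟨c, rfl⟩ := Ideal.mem_span_singleton'.1 hb
            refine ⟨Ideal.Quotient.mk I c, trivial, ?_⟩
            rw [← hb', mul_comm]; rfl)).trans
          (Submodule.quotientQuotientEquivQuotientSup I (Ideal.span {r}))
      exact (e.isWeaklyRegular_congr rs).symm

lemma WR.append (rs ts : List R) : ∀ I : Ideal R,
    WR I (rs ++ ts) ↔ WR I rs ∧ WR (I ⊔ Ideal.ofList rs) ts := by
  induction rs with
  | nil => intro I; simp [WR]
  | cons r rs ih =>
    intro I
    simp only [List.cons_append, WR, ih, Ideal.ofList_cons, sup_assoc, and_assoc]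

lemma WR.map {ι : Type*} (f : ι → R) (l : List ι) : ∀ (I0 : Ideal R) (S : Set ι)
    (_ : l.Nodup) (_ : ∀ i ∈ l, i ∉ S)
    (_ : ∀ (S : Set ι) (i), i ∉ S → ∀ u, f i * u ∈ I0 ⊔ Ideal.span (f '' S) →
      u ∈ I0 ⊔ Ideal.span (f '' S)), WR (I0 ⊔ Ideal.span (f '' S)) (l.map f) := by
  induction l with
  | nil => intros; simp [WR]
  | cons a l ih =>
    intro I0 S h1 h2 h3
    rw [List.nodup_cons] at h1
    refine ⟨h3 S a (h2 a (by simp)), ?_⟩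
    have : I0 ⊔ Ideal.span (f '' S) ⊔ Ideal.span {f a} = I0 ⊔ Ideal.span (f '' (insert a S)) := by
      rw [Set.image_insert_eq, Ideal.span_insert, sup_assoc, sup_comm (Ideal.span {f a})]
    rw [this]
    apply ih _ _ h1.2 _ h3
    intro i hi hi'
    rcases hi' with rfl | hi'
    · exact h1.1 hi
    · exact h2 i (by simp [hi]) hi'

end wr

section wr2
variable {σ K : Type*} [Field K] [Finite σ]

/-- homogeneous element of the maximal ideal -/
def HM (a : MvPolynomial σ K) : Prop := (∃ d, a.IsHomogeneous d) ∧ constantCoeff a = 0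

lemma WR.swap {I : Ideal (MvPolynomial σ K)} (hI : Hom I) {a b : MvPolynomial σ K}
    (ha : HM a) (hb : HM b) {rs : List (MvPolynomial σ K)} (h : WR I (a :: b :: rs)) :
    WR I (b :: a :: rs) := by
  obtain ⟨h1, h2, h3⟩ := h
  have hbI : ∀ f, b * f ∈ I → f ∈ I := by
    let L : Ideal (MvPolynomial σ K) := Submodule.comap (LinearMap.mulLeft _ b) I
    suffices hL : L ≤ I from fun f hf => hL hf
    apply nak hI a ha.2
    intro f hf
    have hf : b * f ∈ I := hf
    have := h2 f (Ideal.mem_sup_left hf)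
    obtain ⟨u, hu, v, hv, rfl⟩ := Submodule.mem_sup.1 this
    obtain ⟨c, rfl⟩ := Ideal.mem_span_singleton'.1 hv
    refine ⟨c, ?_, ?_⟩
    · show b * c ∈ I
      apply h1
      have h5 := sub_mem hf (Ideal.mul_mem_left I b hu)
      convert h5 using 1; ring
    · convert hu using 1; ring
  refine ⟨hbI, ?_, ?_⟩
  · intro f hf
    obtain ⟨u, hu, v, hv, huv⟩ := Submodule.mem_sup.1 hf
    obtain ⟨c, rfl⟩ := Ideal.mem_span_singleton'.1 hv
    have : c ∈ I ⊔ Ideal.span {a} := h2 c (by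
      have : b * c = a * f - u := by rw [← huv]; ring
      rw [this]
      exact sub_mem (Ideal.mem_sup_right (Ideal.mul_mem_right _ _ (Ideal.mem_span_singleton_self _)))
        (Ideal.mem_sup_left hu))
    obtain ⟨p, hp, q, hq, rfl⟩ := Submodule.mem_sup.1 this
    obtain ⟨e, rfl⟩ := Ideal.mem_span_singleton'.1 hq
    have h6 : f - b * e ∈ I := h1 _ (by
      have : a * (f - b * e) = u + b * p := by linear_combination -huv
      rw [this]; exact add_mem hu (Ideal.mul_mem_left _ _ hp))
    have : f = (f - b * e) + e * b := by ring
    rw [this]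
    exact Submodule.add_mem_sup h6 (Ideal.mul_mem_left _ _ (Ideal.mem_span_singleton_self _))
  · rwa [sup_assoc, sup_comm (Ideal.span {b}), ← sup_assoc]

lemma WR.perm {l l' : List (MvPolynomial σ K)} (p : l.Perm l') :
    ∀ {I : Ideal (MvPolynomial σ K)} (_ : Hom I) (_ : ∀ a ∈ l, HM a), WR I l → WR I l' := by
  induction p with
  | nil => intros; assumption
  | cons x _ ih =>
    intro I hI hl h
    exact ⟨h.1, ih (hI.sup (Hom.single (hl x (by simp)).1)) (fun a ha => hl a (by simp [ha])) h.2⟩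
  | swap x y l =>
    intro I hI hl h
    exact WR.swap hI (hl _ (by simp)) (hl _ (by simp)) h
  | trans p q ih1 ih2 =>
    intro I hI hl h
    exact ih2 hI (fun a ha => hl a (p.mem_iff.2 ha)) (ih1 hI hl h)

lemma depthStep (h δ : MvPolynomial σ K) (hδ : ∃ d, δ.IsHomogeneous d)
    (θs : List (MvPolynomial σ K)) :
    ∀ (I : Ideal (MvPolynomial σ K)) (_ : Hom I) (_ : ∀ a ∈ θs, HM a) (_ : h * δ ∈ I)
      (_ : WR I θs)
      (_ : ∀ f, h * f ∈ I ⊔ Ideal.ofList θs → f ∈ I ⊔ Ideal.ofList θs ⊔ Ideal.span {δ}),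
      WR (I ⊔ Ideal.span {h}) θs ∧ ∀ f, h * f ∈ I → f ∈ I ⊔ Ideal.span {δ} := by
  induction θs with
  | nil => intro I _ _ _ _ h1; refine ⟨trivial, ?_⟩; simpa using h1
  | cons θ θs ih =>
    intro I hI hθ hh hw hc
    obtain ⟨ih1, ih2⟩ := ih (I ⊔ Ideal.span {θ}) (hI.sup (Hom.single (hθ θ (by simp)).1))
      (fun a ha => hθ a (by simp [ha])) (Ideal.mem_sup_left hh) hw.2 (by
        simpa only [Ideal.ofList_cons, sup_assoc] using hc)
    refine ⟨⟨?_, ?_⟩, ?_⟩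
    · intro f hf
      obtain ⟨u, hu, v, hv, huv⟩ := Submodule.mem_sup.1 hf
      obtain ⟨c, rfl⟩ := Ideal.mem_span_singleton'.1 hv
      have h1 : c ∈ I ⊔ Ideal.span {θ} ⊔ Ideal.span {δ} := ih2 c (by
        have : h * c = -u + f * θ := by linear_combination huv
        rw [this]
        exact Submodule.add_mem_sup (neg_mem hu)
          (Ideal.mul_mem_left _ _ (Ideal.mem_span_singleton_self _)))
      obtain ⟨p, hp, q, hq, rfl⟩ := Submodule.mem_sup.1 h1
      obtain ⟨p, hpI, p', hp', rfl⟩ := Submodule.mem_sup.1 hp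
      obtain ⟨e, rfl⟩ := Ideal.mem_span_singleton'.1 hq
      obtain ⟨e', rfl⟩ := Ideal.mem_span_singleton'.1 hp'
      have h2 : f - h * e' ∈ I := hw.1 _ (by
        have : θ * (f - h * e') = u + h * p + e * (h * δ) := by linear_combination -huv
        rw [this]
        exact add_mem (add_mem hu (Ideal.mul_mem_left _ _ hpI)) (Ideal.mul_mem_left _ _ hh))
      have : f = (f - h * e') + e' * h := by ring
      rw [this]
      exact Submodule.add_mem_sup h2 (Ideal.mul_mem_left _ _ (Ideal.mem_span_singleton_self _))
    · rwa [sup_assoc, sup_comm (Ideal.span {h}), ← sup_assoc]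
    · let L : Ideal (MvPolynomial σ K) := Submodule.comap (LinearMap.mulLeft _ h) I
      suffices hL : L ≤ I ⊔ Ideal.span {δ} from fun f hf => hL hf
      apply nak (hI.sup (Hom.single hδ)) θ (hθ θ (by simp)).2
      intro f hf
      have hf : h * f ∈ I := hf
      have h1 := ih2 f (Ideal.mem_sup_left hf)
      obtain ⟨p, hp, q, hq, rfl⟩ := Submodule.mem_sup.1 h1
      obtain ⟨p, hpI, p', hp', rfl⟩ := Submodule.mem_sup.1 hp
      obtain ⟨e, rfl⟩ := Ideal.mem_span_singleton'.1 hq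
      obtain ⟨e', rfl⟩ := Ideal.mem_span_singleton'.1 hp'
      refine ⟨e', ?_, ?_⟩
      · show h * e' ∈ I
        apply hw.1
        have : θ * (h * e') = h * (p + e' * θ + e * δ) - h * p - e * (h * δ) := by ring
        rw [this]
        exact sub_mem (sub_mem hf (Ideal.mul_mem_left _ _ hpI)) (Ideal.mul_mem_left _ _ hh)
      · have : p + e' * θ + e * δ - θ * e' = p + e * δ := by ring
        rw [this]
        exact Submodule.add_mem_sup hpI (Ideal.mul_mem_left _ _ (Ideal.mem_span_singleton_self _))

end wr2
end RJ

open MvPolynomial Matrix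

namespace RJ

section mono
variable {τ K : Type*} [Field K]

lemma mem_powers (e : ℕ) (S : Set τ) (u : MvPolynomial τ K) :
    u ∈ Ideal.span ((fun i => (X i : MvPolynomial τ K) ^ e) '' S) ↔
      ∀ m ∈ u.support, ∃ i ∈ S, e ≤ m i := by
  have : (fun i => (X i : MvPolynomial τ K) ^ e) '' S =
      (fun s => monomial s (1 : K)) '' ((fun i => Finsupp.single i e) '' S) := by
    rw [Set.image_image]
    simp only [X_pow_eq_monomial]
  rw [this, mem_ideal_span_monomial_image]
  simp [Finsupp.single_le_iff]

lemma mem_shift {u : MvPolynomial τ K} {m : τ →₀ ℕ} (h : m ∈ u.support) (j : τ) (e : ℕ) :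
    m + Finsupp.single j e ∈ ((X j) ^ e * u).support := by
  rw [mem_support_iff, X_pow_eq_monomial, add_comm, coeff_monomial_mul, one_mul]
  exact mem_support_iff.1 h

lemma powers_regular (e : ℕ) (S : Set τ) (u : MvPolynomial τ K) (j : τ) (hj : j ∉ S)
    (h : X j ^ e * u ∈ Ideal.span ((fun i => (X i : MvPolynomial τ K) ^ e) '' S)) :
    u ∈ Ideal.span ((fun i => (X i : MvPolynomial τ K) ^ e) '' S) := by
  rw [mem_powers] at h ⊢
  intro m hm
  obtain ⟨i, hi, hi'⟩ := h _ (mem_shift hm j e)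
  refine ⟨i, hi, ?_⟩
  have : j ≠ i := fun hh => hj (hh ▸ hi)
  simpa [Finsupp.single_apply, this] using hi'

lemma mem_powers_prod (A : Finset τ) (u : MvPolynomial τ K) :
    u ∈ Ideal.span ((fun i => (X i : MvPolynomial τ K) ^ 2) '' A) ⊔
        Ideal.span {∏ i ∈ A, X i} ↔
      ∀ m ∈ u.support, (∃ i ∈ A, 2 ≤ m i) ∨ ∀ i ∈ A, 1 ≤ m i := by
  classical
  have : Ideal.span ((fun i => (X i : MvPolynomial τ K) ^ 2) '' A) ⊔
        Ideal.span {∏ i ∈ A, X i} = Ideal.span 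
      ((fun s => monomial s (1 : K)) '' (insert (∑ i ∈ A, Finsupp.single i 1)
        ((fun i => Finsupp.single i 2) '' A))) := by
    rw [Set.image_insert_eq, Set.image_image, Ideal.span_insert, sup_comm]
    simp only [X_pow_eq_monomial]
    congr 3
    rw [monomial_sum_one]
    rfl
  rw [this, mem_ideal_span_monomial_image]
  refine forall₂_congr fun m hm => ?_
  simp only [Set.mem_insert_iff, exists_eq_or_imp, Set.exists_mem_image, Finsupp.single_le_iff,
    Finset.mem_coe]
  rw [or_comm]
  refine or_congr Iff.rfl ?_
  constructor
  · intro h i hi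
    have h1 := h i
    rw [Finsupp.finsetSum_apply, ← Finset.add_sum_erase _ _ hi] at h1
    simp only [Finsupp.single_eq_same] at h1
    omega
  · intro h i
    rw [Finsupp.finsetSum_apply]
    by_cases hi : i ∈ A
    · rw [Finset.sum_eq_single i]
      · simpa using h i hi
      · intro b _ hb; simp [Finsupp.single_apply, hb]
      · intro h; exact absurd hi h
    · rw [Finset.sum_eq_zero]
      · simp
      · intro b hb
        have : b ≠ i := fun h => hi (h ▸ hb)
        simp [Finsupp.single_apply, this]

lemma socle_powers (A : Finset τ) (u : MvPolynomial τ K)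
    (h : ∀ j ∈ A, X j * u ∈ Ideal.span ((fun i => (X i : MvPolynomial τ K) ^ 2) '' A)) :
    u ∈ Ideal.span ((fun i => (X i : MvPolynomial τ K) ^ 2) '' A) ⊔
        Ideal.span {∏ i ∈ A, X i} := by
  rw [mem_powers_prod]
  intro m hm
  by_contra hcon
  push Not at hcon
  obtain ⟨h1, j, hj, hj'⟩ := hcon
  have h2 := h j hj
  rw [mem_powers] at h2
  have h3 := mem_shift hm j 1
  rw [pow_one] at h3
  obtain ⟨i, hi, hi'⟩ := h2 _ h3
  have h4 := h1 i hi
  by_cases hij : j = i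
  · subst hij; simp at hi'; omega
  · simp [Finsupp.single_apply, hij] at hi'; omega

lemma socle_not_mem [DecidableEq τ] (A : Finset τ) (a : τ) (ha : a ∈ A) :
    (∏ i ∈ A.erase a, X i : MvPolynomial τ K) ∉
      Ideal.span ((fun i => (X i : MvPolynomial τ K) ^ 2) '' A) ⊔
        Ideal.span {∏ i ∈ A, X i} := by
  rw [mem_powers_prod]
  intro h
  have h0 : (∏ i ∈ A.erase a, X i : MvPolynomial τ K) =
      monomial (∑ i ∈ A.erase a, Finsupp.single i 1) 1 := by
    rw [monomial_sum_one]; rfl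
  have hv : ∀ i, (∑ i ∈ A.erase a, Finsupp.single i 1 : τ →₀ ℕ) i = 
      if i ∈ A.erase a then 1 else 0 := by
    intro i
    rw [Finsupp.finsetSum_apply]
    simp [Finsupp.single_apply]
  have := h (∑ i ∈ A.erase a, Finsupp.single i 1) (by rw [h0]; simp [mem_support_iff])
  rcases this with ⟨i, hi, h2⟩ | h2
  · rw [hv] at h2; split_ifs at h2 <;> omega
  · have := h2 a ha
    rw [hv] at this; simp at this

end mono
end RJ

open MvPolynomial Matrix

set_option linter.unusedSectionVars false
set_option linter.unusedSimpArgs false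
namespace RJ

section conc
variable (n : ℕ) [NeZero n] (K : Type*) [Field K]

/-- the variables -/
abbrev Sg (n : ℕ) := (Fin (n + 1) × Fin n) ⊕ Fin n
/-- the ring -/
abbrev Rg (n : ℕ) (K : Type*) [Field K] := MvPolynomial (Sg n) K

/-- generic matrix entries -/
noncomputable def xx (a : Fin (n + 1) × Fin n) : Rg n K := X (Sum.inl a)
/-- generic column -/
noncomputable def yy (j : Fin n) : Rg n K := X (Sum.inr j)
/-- special index -/
def ci : Fin (n + 1) × Fin n := (Fin.last n, 0)
/-- special variable -/
noncomputable def cc : Rg n K := xx n K (ci n)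
/-- diagonal part -/
noncomputable def F1 (a : Fin (n + 1) × Fin n) : Rg n K :=
  if a.1 = a.2.castSucc then yy n K a.2 else 0
/-- coefficient of `c` -/
noncomputable def F2 (a : Fin (n + 1) × Fin n) : Rg n K :=
  if a.1 = (a.2 - 1).castSucc then 1 else 0
/-- the linear forms -/
noncomputable def th (a : Fin (n + 1) × Fin n) : Rg n K :=
  xx n K a - F1 n K a + F2 n K a * cc n K
/-- index set of linear forms -/
abbrev Vi := {a : Fin (n + 1) × Fin n // a ≠ ci n}
/-- list of linear forms -/
noncomputable def ths : List (Rg n K) := (Finset.univ : Finset (Vi n)).toList.map fun a : Vi n => th n K a.1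
/-- list of y -/
noncomputable def ys : List (Rg n K) := (Finset.univ : Finset (Fin n)).toList.map (yy n K)
/-- the generators -/
noncomputable def gg (i : Fin (n + 1)) : Rg n K := ∑ j, xx n K (i, j) * yy n K j
/-- list of first n generators -/
noncomputable def gs : List (Rg n K) :=
  (Finset.univ : Finset (Fin n)).toList.map fun j => gg n K j.castSucc
/-- ideal generated by the linear forms -/
noncomputable def TI : Ideal (Rg n K) := Ideal.span (Set.range fun a : Vi n => th n K a)
/-- ideal of first n generators -/
noncomputable def GI : Ideal (Rg n K) := Ideal.span (Set.range fun j : Fin n => gg n K j.castSucc)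
/-- the determinant -/
noncomputable def dl : Rg n K := (Matrix.of fun i j : Fin n => xx n K (i.castSucc, j)).det

lemma ofList_map {ι R : Type*} [Fintype ι] [CommRing R] (f : ι → R) :
    Ideal.ofList ((Finset.univ : Finset ι).toList.map f) = Ideal.span (Set.range f) := by
  unfold Ideal.ofList
  congr 1
  ext x; simp

/-- substitution -/
noncomputable def piS (S : Set (Vi n)) : Rg n K →ₐ[K] Rg n K := by
  classical
  exact aeval (Sum.elim (fun a => if h : a = ci n then 0 else
    if (⟨a, h⟩ : Vi n) ∈ S then F1 n K a else xx n K a) (yy n K))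

variable {n K}
lemma piS_yy (S) (j) : piS n K S (yy n K j) = yy n K j := by
  simp [piS, yy]
lemma piS_F1 (S) (j) : piS n K S (F1 n K j) = F1 n K j := by
  unfold F1; split_ifs <;> simp [piS_yy]
lemma piS_cc (S) : piS n K S (cc n K) = 0 := by
  simp [piS, cc, xx]
lemma piS_xx_mem (S) (a : Vi n) (h : a ∈ S) : piS n K S (xx n K a) = F1 n K a := by
  simp [piS, xx, h, a.2]
lemma piS_xx_not_mem (S) (a : Vi n) (h : a ∉ S) : piS n K S (xx n K a) = xx n K a := by
  simp [piS, xx, h, a.2]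
lemma piS_th_mem (S) (a : Vi n) (h : a ∈ S) : piS n K S (th n K a) = 0 := by
  simp [th, piS_cc, piS_F1, piS_xx_mem S a h]
lemma piS_th_not_mem (S) (a : Vi n) (h : a ∉ S) :
    piS n K S (th n K a) = xx n K a - F1 n K a := by
  simp [th, piS_cc, piS_F1, piS_xx_not_mem S a h]

lemma xx_sub_F1_ne (a) : xx n K a - F1 n K a ≠ 0 := by
  intro h
  have h1 := congrArg (aeval (Sum.elim (fun _ => (1 : K)) (fun _ => (0 : K)))) h
  simp only [map_sub, xx, F1, yy] at h1
  split_ifs at h1 <;> simp at h1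

/-- the ideals -/
noncomputable def PS (S : Set (Vi n)) : Ideal (Rg n K) :=
  Ideal.span {cc n K} ⊔ Ideal.span ((fun a : Vi n => th n K a) '' S)

lemma sub_piS_mem (S) (f : Rg n K) : f - piS n K S f ∈ PS S := by
  rw [← Ideal.Quotient.eq]
  have : (Ideal.Quotient.mkₐ K (PS S)) = ((Ideal.Quotient.mkₐ K (PS (K := K) S))).comp (piS n K S) := by
    ext s
    simp only [AlgHom.comp_apply, Ideal.Quotient.mkₐ_eq_mk]
    rcases s with a | j
    · change Ideal.Quotient.mk _ (xx n K a) = Ideal.Quotient.mk _ (piS n K S (xx n K a))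
      rw [Ideal.Quotient.eq]
      have hc : cc n K ∈ PS (K := K) S := Ideal.mem_sup_left (Ideal.mem_span_singleton_self _)
      by_cases h : a = ci n
      · subst h
        change cc n K - piS n K S (cc n K) ∈ _
        rw [piS_cc, sub_zero]
        exact hc
      · by_cases h' : (⟨a, h⟩ : Vi n) ∈ S
        · rw [piS_xx_mem S ⟨a, h⟩ h']
          have : xx n K a - F1 n K a = th n K a - F2 n K a * cc n K := by unfold th; ring
          rw [this]
          exact sub_mem (Ideal.mem_sup_right (Ideal.subset_span ⟨_, h', rfl⟩))
            (Ideal.mul_mem_left _ _ hc)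
        · rw [piS_xx_not_mem S ⟨a, h⟩ h', sub_self]; exact zero_mem _
    · change Ideal.Quotient.mk _ (yy n K j) = Ideal.Quotient.mk _ (piS n K S (yy n K j))
      rw [piS_yy]
  exact DFunLike.congr_fun this f

lemma piS_PS (S) (f : Rg n K) (hf : f ∈ PS S) : piS n K S f = 0 := by
  have : PS S ≤ RingHom.ker (piS n K S) := by
    refine sup_le ?_ ?_
    · rw [Ideal.span_singleton_le_iff_mem]; exact piS_cc S
    · rw [Ideal.span_le]
      rintro _ ⟨a, ha, rfl⟩
      exact piS_th_mem S a ha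
  exact this hf

lemma mem_PS_iff (S) (f : Rg n K) : f ∈ PS S ↔ piS n K S f = 0 := by
  refine ⟨piS_PS S f, fun h => ?_⟩
  have := sub_piS_mem S f
  rwa [h, sub_zero] at this

lemma wr_c_ths : WR (Ideal.span {cc n K}) (ths n K) := by
  have := WR.map (fun a : Vi n => th n K a) (Finset.univ : Finset (Vi n)).toList
    (Ideal.span {cc n K}) ∅ (Finset.nodup_toList _) (by simp) (by
      intro S i hi u hu
      change _ ∈ PS S at hu
      change _ ∈ PS S
      rw [mem_PS_iff, map_mul, mul_eq_zero, piS_th_not_mem S i hi] at hu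
      rw [mem_PS_iff]
      exact hu.resolve_left (xx_sub_F1_ne _))
  simpa [ths] using this

/-- full ideal -/
lemma c_ths : Ideal.span {cc n K} ⊔ Ideal.ofList (ths n K) = PS Set.univ := by
  rw [ths, ofList_map, PS, Set.image_univ]

lemma c_TI : Ideal.span {cc n K} ⊔ TI n K = PS Set.univ := by
  rw [TI, PS, Set.image_univ]

lemma ofList_ths : Ideal.ofList (ths n K) = TI n K := by rw [ths, ofList_map, TI]
lemma ofList_gs : Ideal.ofList (gs n K) = GI n K := by rw [gs, ofList_map, GI]

lemma mem_PS_sup (A : Ideal (Rg n K)) (B : Set (Rg n K)) (hA : A = Ideal.span B)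
    (hB : ∀ b ∈ B, piS n K Set.univ b = b) (f) :
    f ∈ PS Set.univ ⊔ A ↔ piS n K Set.univ f ∈ A := by
  have hA' : ∀ a ∈ A, piS n K Set.univ a ∈ A := by
    have : A ≤ Ideal.comap (piS n K Set.univ) A := by
      conv_lhs => rw [hA]
      rw [Ideal.span_le]
      intro b hb
      change piS n K Set.univ b ∈ A
      rw [hB b hb, hA]
      exact Ideal.subset_span hb
    exact this
  constructor
  · intro h
    obtain ⟨p, hp, q, hq, rfl⟩ := Submodule.mem_sup.1 h
    rw [map_add, piS_PS _ _ hp, zero_add]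
    exact hA' q hq
  · intro h
    have : f = (f - piS n K Set.univ f) + piS n K Set.univ f := by ring
    rw [this]
    exact Submodule.add_mem_sup (sub_piS_mem _ f) h

/-- set of y powers -/
lemma ypow_image (e : ℕ) (S : Set (Fin n)) : (fun j => yy n K j ^ e) '' S =
    (fun i => (X i : Rg n K) ^ e) '' (Sum.inr '' S) := by
  rw [Set.image_image]; rfl

lemma reg_ypow (e : ℕ) (S : Set (Fin n)) (i) (hi : i ∉ S) (u : Rg n K)
    (hu : yy n K i ^ e * u ∈ PS Set.univ ⊔ Ideal.span ((fun j => yy n K j ^ e) '' S)) :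
    u ∈ PS Set.univ ⊔ Ideal.span ((fun j => yy n K j ^ e) '' S) := by
  rw [mem_PS_sup _ _ rfl (by rintro _ ⟨j, -, rfl⟩; simp [piS_yy])] at hu ⊢
  rw [map_mul, map_pow, piS_yy] at hu
  rw [ypow_image] at hu ⊢
  exact powers_regular e _ _ (Sum.inr i) (by simpa using hi) hu

lemma wr_ys : WR (PS Set.univ) (ys n K) := by
  have := WR.map (fun j => yy n K j ^ 1) (Finset.univ : Finset (Fin n)).toList
    (PS Set.univ) ∅ (Finset.nodup_toList _) (by simp) (fun S i hi u hu => reg_ypow 1 S i hi u hu)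
  simpa [ys] using this

lemma th_mod (a : Vi n) : th n K a ∈ TI n K := Ideal.subset_span ⟨a, rfl⟩

/-- reduction of `X` modulo `T` -/
lemma xx_mod (a : Fin (n + 1) × Fin n) : xx n K a -
    (F1 n K a - F2 n K a * cc n K + if a = ci n then cc n K else 0) ∈ TI n K := by
  split_ifs with h
  · subst h
    have : F1 n K (ci n) = 0 := by simp [F1, ci, NeZero.ne n]
    have h2 : F2 n K (ci n) = 0 := by simp [F2, ci, (Fin.castSucc_lt_last _).ne']
    rw [this, h2]
    simp [cc]
  · convert th_mod ⟨a, h⟩ using 1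
    unfold th; ring

lemma gg_mod' (i : Fin (n + 1)) : gg n K i - ∑ j, (F1 n K (i, j) - F2 n K (i, j) * cc n K +
    if (i, j) = ci n then cc n K else 0) * yy n K j ∈ TI n K := by
  rw [gg, ← Finset.sum_sub_distrib]
  refine Ideal.sum_mem _ fun j _ => ?_
  rw [← sub_mul]
  exact Ideal.mul_mem_right _ _ (xx_mod (i, j))

lemma gg_mod (i : Fin n) :
    gg n K i.castSucc - (yy n K i ^ 2 - cc n K * yy n K (i + 1)) ∈ TI n K := by
  convert gg_mod' i.castSucc using 2
  simp only [F1, F2, ci, Prod.mk.injEq, (Fin.castSucc_lt_last i).ne, false_and, if_false, add_zero,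
    Fin.castSucc_inj, sub_mul, Finset.sum_sub_distrib, ite_mul, zero_mul, one_mul,
    Finset.sum_ite_eq, Finset.mem_univ, if_true, eq_sub_iff_add_eq]
  ring

lemma gg_last_mod : gg n K (Fin.last n) - cc n K * yy n K 0 ∈ TI n K := by
  convert gg_mod' (Fin.last n) using 2
  simp only [F1, F2, ci, Prod.mk.injEq, (Fin.castSucc_lt_last _).ne', true_and, if_false, add_zero,
     sub_mul, ite_mul, zero_mul, sub_zero, zero_add,
    Finset.sum_ite_eq', Finset.mem_univ, if_true]

lemma TI_le : TI n K ≤ PS Set.univ := by rw [← c_TI]; exact le_sup_right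
lemma cc_mem : cc n K ∈ PS (n := n) (K := K) Set.univ := by
  rw [← c_TI]; exact Ideal.mem_sup_left (Ideal.mem_span_singleton_self _)

lemma gg_mod_PS (i : Fin n) :
    gg n K i.castSucc - yy n K i ^ 2 ∈ PS (n := n) (K := K) Set.univ := by
  have := sub_mem (TI_le (gg_mod (K := K) i)) (Ideal.mul_mem_right (yy n K (i + 1)) _ cc_mem)
  convert this using 1; ring

lemma PS_sup_congr {ι : Type*} (A : Ideal (Rg n K)) (f g : ι → Rg n K) (S : Set ι)
    (h : ∀ i, f i - g i ∈ A) : A ⊔ Ideal.span (f '' S) = A ⊔ Ideal.span (g '' S) := by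
  apply le_antisymm
  · refine sup_le le_sup_left ?_
    rw [Ideal.span_le]
    rintro _ ⟨i, hi, rfl⟩
    have : f i = (f i - g i) + g i := by ring
    rw [SetLike.mem_coe, this]
    exact Submodule.add_mem_sup (h i) (Ideal.subset_span ⟨i, hi, rfl⟩)
  · refine sup_le le_sup_left ?_
    rw [Ideal.span_le]
    rintro _ ⟨i, hi, rfl⟩
    have : g i = -(f i - g i) + f i := by ring
    rw [SetLike.mem_coe, this]
    exact Submodule.add_mem_sup (neg_mem (h i)) (Ideal.subset_span ⟨i, hi, rfl⟩)

lemma wr_gs : WR (PS Set.univ) (gs n K) := by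
  have := WR.map (fun j : Fin n => gg n K j.castSucc) (Finset.univ : Finset (Fin n)).toList
    (PS Set.univ) ∅ (Finset.nodup_toList _) (by simp) (by
      intro S i hi u hu
      rw [PS_sup_congr _ _ (fun j => yy n K j ^ 2) S gg_mod_PS] at hu ⊢
      apply reg_ypow 2 S i hi u
      have h1 := Ideal.mem_sup_left (T := Ideal.span ((fun j => yy n K j ^ 2) '' S)) 
        (Ideal.mul_mem_right u _ (gg_mod_PS (K := K) i))
      have := sub_mem hu h1
      convert this using 1
      ring)
  simpa [gs] using this

end conc
end RJ

open MvPolynomial Matrix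
set_option linter.unusedSectionVars false
set_option linter.unusedSimpArgs false
namespace RJ

section conc
variable {n : ℕ} [NeZero n] {K : Type*} [Field K]

lemma HM_yy (j) : HM (yy n K j) := ⟨⟨1, isHomogeneous_X _ _⟩, by simp [yy]⟩
lemma HM_xx (j) : HM (xx n K j) := ⟨⟨1, isHomogeneous_X _ _⟩, by simp [xx]⟩
lemma HM_cc : HM (cc n K) := HM_xx _
lemma HM_th (a) : HM (th n K a) := by
  refine ⟨⟨1, ?_⟩, ?_⟩
  · unfold th
    refine IsHomogeneous.add (IsHomogeneous.sub (isHomogeneous_X _ _) ?_) ?_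
    · unfold F1; split_ifs
      · exact isHomogeneous_X _ _
      · exact isHomogeneous_zero _ _ _
    · unfold F2; split_ifs
      · rw [one_mul]; exact isHomogeneous_X _ _
      · rw [zero_mul]; exact isHomogeneous_zero _ _ _
  · simp only [th, F1, F2, map_add, map_sub, map_mul, HM_cc.2, (HM_xx a).2]
    split_ifs <;> simp [(HM_yy _).2]
lemma HM_gg (i) : HM (gg n K i) := by
  refine ⟨⟨2, ?_⟩, ?_⟩
  · unfold gg
    exact IsHomogeneous.sum _ _ _ fun j _ =>
      IsHomogeneous.mul (isHomogeneous_X K _) (isHomogeneous_X K _)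
  · simp [gg, map_sum, (HM_yy _).2]

lemma HM_ths : ∀ a ∈ ths n K, HM a := by
  intro a ha
  obtain ⟨b, -, rfl⟩ := List.mem_map.1 ha
  exact HM_th _
lemma HM_ys : ∀ a ∈ ys n K, HM a := by
  intro a ha
  obtain ⟨b, -, rfl⟩ := List.mem_map.1 ha
  exact HM_yy _
lemma HM_gs : ∀ a ∈ gs n K, HM a := by
  intro a ha
  obtain ⟨b, -, rfl⟩ := List.mem_map.1 ha
  exact HM_gg _

lemma dl_hom : ∃ d, (dl n K).IsHomogeneous d := by
  refine ⟨n, ?_⟩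
  unfold dl
  rw [Matrix.det_apply]
  refine IsHomogeneous.sum _ _ _ fun s _ => ?_
  have : (∏ i, (Matrix.of fun i j : Fin n => xx n K (i.castSucc, j)) (s i) i).IsHomogeneous n := by
    have h := IsHomogeneous.prod (R := K) Finset.univ
      (fun i => (Matrix.of fun i j : Fin n => xx n K (i.castSucc, j)) (s i) i) (fun _ => 1)
      (fun i _ => isHomogeneous_X K _)
    simpa using h
  rcases Int.units_eq_one_or (Equiv.Perm.sign s) with h | h <;> rw [h]
  · simpa using this
  · simpa using this.neg

lemma wr_c (l : List (Rg n K)) (h : WR (PS (n := n) (K := K) Set.univ) l) :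
    WR ⊥ (cc n K :: (ths n K ++ l)) := by
  refine ⟨?_, ?_⟩
  · intro f hf
    rw [Ideal.mem_bot, mul_eq_zero] at hf
    exact hf.resolve_left (X_ne_zero _)
  · rw [bot_sup_eq, WR.append, c_ths]
    exact ⟨wr_c_ths, h⟩

lemma wr_main : WR ⊥ (ths n K ++ (cc n K :: ys n K)) := by
  refine WR.perm ?_ Hom.bot ?_ (wr_c _ wr_ys)
  · exact List.perm_middle.symm
  · intro a ha
    simp only [List.mem_cons, List.mem_append] at ha
    rcases ha with rfl | ha | ha
    · exact HM_cc
    · exact HM_ths a ha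
    · exact HM_ys a ha

lemma wr_g : WR ⊥ (gs n K ++ (ths n K ++ [cc n K])) := by
  refine WR.perm ?_ Hom.bot ?_ (wr_c _ wr_gs)
  · have h1 : (cc n K :: (ths n K ++ gs n K)).Perm ((ths n K ++ gs n K) ++ [cc n K]) :=
      List.perm_append_comm (l₁ := [cc n K])
    refine h1.trans ?_
    rw [← List.append_assoc]
    exact List.Perm.append_right _ List.perm_append_comm
  · intro a ha
    simp only [List.mem_cons, List.mem_append] at ha
    rcases ha with rfl | ha | ha
    · exact HM_cc
    · exact HM_ths a ha
    · exact HM_gs a ha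

lemma wr_G_ths : WR (GI n K) (ths n K) := by
  have := wr_g (n := n) (K := K)
  rw [WR.append, WR.append, ofList_gs, bot_sup_eq] at this
  exact this.2.1

/-- the ideal `G + T` -/
noncomputable def IT (n : ℕ) [NeZero n] (K : Type*) [Field K] : Ideal (Rg n K) := GI n K ⊔ TI n K

lemma c_reg (f : Rg n K) (h : cc n K * f ∈ IT n K) : f ∈ IT n K := by
  have := wr_g (n := n) (K := K)
  rw [WR.append, WR.append, ofList_gs, bot_sup_eq, ofList_ths] at this
  exact this.2.2.1 f h

lemma Hom_GI : Hom (GI n K) := Hom.span _ (by rintro _ ⟨i, rfl⟩; exact (HM_gg _).1)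
lemma Hom_IT : Hom (IT n K) :=
  Hom_GI.sup (Hom.span _ (by rintro _ ⟨i, rfl⟩; exact (HM_th _).1))

lemma gg_IT (i : Fin n) : yy n K i ^ 2 - cc n K * yy n K (i + 1) ∈ IT n K := by
  have h1 : gg n K i.castSucc ∈ IT n K := Ideal.mem_sup_left (Ideal.subset_span ⟨i, rfl⟩)
  have h2 := Ideal.mem_sup_right (S := GI n K) (gg_mod (K := K) i)
  have := sub_mem h1 h2
  convert this using 1; ring

lemma chain (f : Rg n K) (h : yy n K 0 * f ∈ IT n K) (j) : yy n K j * f ∈ IT n K := by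
  have key : ∀ k : ℕ, yy n K (Fin.ofNat n k) * f ∈ IT n K := by
    intro k
    induction k with
    | zero => exact h
    | succ k ih =>
      have hk : Fin.ofNat n (k + 1) = Fin.ofNat n k + 1 := by
        ext; simp [Fin.val_add, Fin.ofNat]
      rw [hk]
      apply c_reg
      have := sub_mem (Ideal.mul_mem_left _ (yy n K (Fin.ofNat n k)) ih)
        (Ideal.mul_mem_right f _ (gg_IT (K := K) (Fin.ofNat n k)))
      convert this using 1; ring
  simpa using key j.val

lemma IT_c : IT n K ⊔ Ideal.span {cc n K} =
    PS Set.univ ⊔ Ideal.span ((fun j => yy n K j ^ 2) '' Set.univ) := by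
  rw [IT, sup_assoc, sup_comm (TI n K), c_TI, sup_comm, GI, ← Set.image_univ]
  exact PS_sup_congr _ _ _ _ gg_mod_PS

lemma dl_mod : dl n K - ∏ j, yy n K j ∈ PS (n := n) (K := K) Set.univ := by
  rw [mem_PS_iff, map_sub, map_prod]
  simp only [piS_yy]
  rw [sub_eq_zero, dl, AlgHom.map_det, ← Matrix.det_diagonal]
  congr 1
  ext1 i j
  simp only [AlgHom.mapMatrix_apply, Matrix.map_apply, Matrix.of_apply]
  have h : (i.castSucc, j) ≠ ci n := by
    intro h
    exact (Fin.castSucc_lt_last i).ne (congrArg Prod.fst h)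
  rw [piS_xx_mem Set.univ ⟨_, h⟩ (Set.mem_univ _), F1, Matrix.diagonal_apply]
  simp only [Fin.castSucc_inj]
  split_ifs with h
  · rw [h]
  · rfl

lemma prod_eq : (∏ j, yy n K j) = ∏ i ∈ Finset.univ.image (Sum.inr : Fin n → Sg n), X i := by
  rw [Finset.prod_image (by intro a _ b _ h; exact Sum.inr_injective h)]
  rfl

lemma ysq_eq : (fun j => yy n K j ^ 2) '' Set.univ =
    (fun i => (X i : Rg n K) ^ 2) '' (Finset.univ.image (Sum.inr : Fin n → Sg n) : Finset (Sg n)) := by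
  rw [ypow_image]; simp

lemma IT_c_d : IT n K ⊔ Ideal.span {dl n K} ⊔ Ideal.span {cc n K} =
    PS Set.univ ⊔ (Ideal.span ((fun j => yy n K j ^ 2) '' Set.univ) ⊔
      Ideal.span {∏ j, yy n K j}) := by
  rw [sup_assoc, sup_comm (Ideal.span {dl n K}), ← sup_assoc, IT_c, sup_assoc,
    sup_comm (Ideal.span (_ '' _)), ← sup_assoc, ← sup_assoc,
    sup_assoc (PS _) (Ideal.span (_ '' _)), sup_comm (Ideal.span (_ '' _)), ← sup_assoc]
  congr 1
  have := PS_sup_congr (PS (n := n) (K := K) Set.univ) (fun _ : Unit => dl n K)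
    (fun _ => ∏ j, yy n K j) Set.univ (fun _ => dl_mod)
  simpa using this

lemma mem_ITcd (f : Rg n K) : f ∈ IT n K ⊔ Ideal.span {dl n K} ⊔ Ideal.span {cc n K} ↔
    piS n K Set.univ f ∈ (Ideal.span ((fun j => yy n K j ^ 2) '' Set.univ) ⊔
      Ideal.span {∏ j, yy n K j}) := by
  rw [IT_c_d]
  apply mem_PS_sup _ (((fun j => yy n K j ^ 2) '' Set.univ) ∪ {∏ j, yy n K j})
  · rw [Ideal.span_union]
  · rintro _ (⟨j, -, rfl⟩ | h)
    · simp [piS_yy]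
    · rw [Set.mem_singleton_iff.1 h, map_prod]; simp [piS_yy]

lemma mem_ITc (f : Rg n K) : f ∈ IT n K ⊔ Ideal.span {cc n K} ↔
    piS n K Set.univ f ∈ Ideal.span ((fun j => yy n K j ^ 2) '' Set.univ) := by
  rw [IT_c]
  apply mem_PS_sup _ _ rfl
  rintro _ ⟨j, -, rfl⟩
  simp [piS_yy]

lemma socle_c (f : Rg n K) (h : ∀ j, yy n K j * f ∈ IT n K ⊔ Ideal.span {cc n K}) :
    f ∈ IT n K ⊔ Ideal.span {dl n K} ⊔ Ideal.span {cc n K} := by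
  rw [mem_ITcd, prod_eq, ysq_eq]
  apply socle_powers
  intro j hj
  obtain ⟨j, -, rfl⟩ := Finset.mem_image.1 hj
  have := h j
  rw [mem_ITc, map_mul, piS_yy, ysq_eq] at this
  exact this

lemma yy_dl (j) : yy n K j * dl n K ∈ GI n K := by
  set M : Matrix (Fin n) (Fin n) (Rg n K) := Matrix.of fun i j : Fin n => xx n K (i.castSucc, j)
  have h1 : M *ᵥ (yy n K) = fun i => gg n K i.castSucc := by
    ext1 i; rfl
  have h2 : M.adjugate *ᵥ (M *ᵥ yy n K) = M.det • yy n K := by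
    rw [Matrix.mulVec_mulVec, Matrix.adjugate_mul, Matrix.smul_mulVec, Matrix.one_mulVec]
  have h3 := congrFun h2 j
  rw [h1] at h3
  simp only [Pi.smul_apply, smul_eq_mul] at h3
  rw [mul_comm]
  change M.det * _ ∈ _
  rw [← h3]
  simp only [Matrix.mulVec, dotProduct]
  exact Ideal.sum_mem _ fun i _ => Ideal.mul_mem_left _ _ (Ideal.subset_span (Set.mem_range_self i))

lemma colon (f : Rg n K) (h : ∀ j, yy n K j * f ∈ IT n K) :
    f ∈ IT n K ⊔ Ideal.span {dl n K} := by
  let L : Ideal (Rg n K) := ⨅ j, Submodule.comap (LinearMap.mulLeft _ (yy n K j)) (IT n K)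
  have hL : ∀ f, f ∈ L ↔ ∀ j, yy n K j * f ∈ IT n K := by
    intro f
    simp only [L, Submodule.mem_iInf]
    rfl
  suffices h : L ≤ IT n K ⊔ Ideal.span {dl n K} from h ((hL f).2 ‹_›)
  apply nak (Hom_IT.sup (Hom.single dl_hom)) (cc n K) HM_cc.2
  intro f hf
  rw [hL] at hf
  have h1 := socle_c f fun j => Ideal.mem_sup_left (hf j)
  obtain ⟨p, hp, q, hq, rfl⟩ := Submodule.mem_sup.1 h1
  obtain ⟨e, rfl⟩ := Ideal.mem_span_singleton'.1 hq
  refine ⟨e, ?_, ?_⟩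
  · rw [hL]
    intro j
    apply c_reg
    have h2 : yy n K j * p ∈ IT n K := by
      obtain ⟨a, ha, b, hb, rfl⟩ := Submodule.mem_sup.1 hp
      obtain ⟨d, rfl⟩ := Ideal.mem_span_singleton'.1 hb
      have : yy n K j * (a + d * dl n K) = yy n K j * a + d * (yy n K j * dl n K) := by ring
      rw [this]
      exact add_mem (Ideal.mul_mem_left _ _ ha)
        (Ideal.mul_mem_left _ _ (Ideal.mem_sup_left (yy_dl j)))
    have := sub_mem (hf j) h2
    convert this using 1; ring
  · convert hp using 1; ring

/-- the last generator -/
noncomputable def hl (n : ℕ) [NeZero n] (K : Type*) [Field K] : Rg n K := gg n K (Fin.last n)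

lemma hl_mod : hl n K - cc n K * yy n K 0 ∈ IT n K := Ideal.mem_sup_right gg_last_mod

lemma colon_h (f : Rg n K) (h : hl n K * f ∈ IT n K) : f ∈ IT n K ⊔ Ideal.span {dl n K} := by
  apply colon
  apply chain
  apply c_reg
  have := sub_mem h (Ideal.mul_mem_right f _ hl_mod)
  convert this using 1; ring

lemma hl_dl : hl n K * dl n K ∈ GI n K := by
  rw [hl, gg, Finset.sum_mul]
  refine Ideal.sum_mem _ fun j _ => ?_
  rw [mul_assoc]
  exact Ideal.mul_mem_left _ _ (yy_dl j)

lemma wr_J : WR (GI n K ⊔ Ideal.span {hl n K}) (ths n K) := by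
  refine (depthStep (hl n K) (dl n K) dl_hom (ths n K) (GI n K) Hom_GI HM_ths hl_dl wr_G_ths ?_).1
  rw [ofList_ths]
  exact colon_h

lemma J_eq : Ideal.span (Set.range (gg n K)) = GI n K ⊔ Ideal.span {hl n K} := by
  rw [GI, ← Ideal.span_union]
  congr 1
  ext x
  constructor
  · rintro ⟨i, rfl⟩
    induction i using Fin.lastCases with
    | last => right; rfl
    | cast i => left; exact ⟨i, rfl⟩
  · rintro (⟨i, rfl⟩ | h)
    · exact ⟨_, rfl⟩
    · exact ⟨Fin.last n, h.symm⟩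

/-- the ideal `J + T` -/
noncomputable def BI (n : ℕ) [NeZero n] (K : Type*) [Field K] : Ideal (Rg n K) :=
  IT n K ⊔ Ideal.span {hl n K}

lemma BI_eq : Ideal.span (Set.range (gg n K)) ⊔ Ideal.ofList (ths n K) = BI n K := by
  rw [J_eq, ofList_ths, BI, IT, sup_assoc, sup_assoc, sup_comm (TI n K)]

lemma cy_mem : cc n K * yy n K 0 ∈ BI n K := by
  have := sub_mem (Ideal.mem_sup_right (S := IT n K) (Ideal.mem_span_singleton_self (hl n K)))
    (Ideal.mem_sup_left (T := Ideal.span {hl n K}) hl_mod)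
  rwa [sub_sub_cancel] at this

/-- product of y without first -/
noncomputable def uu (n : ℕ) [NeZero n] (K : Type*) [Field K] : Rg n K :=
  ∏ j ∈ Finset.univ.erase 0, yy n K j

lemma yuu : yy n K 0 * uu n K = ∏ j, yy n K j :=
  Finset.mul_prod_erase _ _ (Finset.mem_univ _)

lemma y_uu (j) : yy n K j * uu n K ∈ IT n K ⊔ Ideal.span {dl n K} ⊔ Ideal.span {cc n K} := by
  rw [mem_ITcd, map_mul, piS_yy]
  have : piS n K Set.univ (uu n K) = uu n K := by
    rw [uu, map_prod]; simp [piS_yy]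
  rw [this]
  by_cases hj : j = 0
  · subst hj
    rw [yuu]
    exact Ideal.mem_sup_right (Ideal.mem_span_singleton_self _)
  · apply Ideal.mem_sup_left
    rw [uu, ← Finset.mul_prod_erase (Finset.univ.erase 0) (yy n K) (a := j) (by simp [hj]), ← mul_assoc, ← sq]
    exact Ideal.mul_mem_right _ _ (Ideal.subset_span ⟨j, trivial, rfl⟩)

lemma y_e (j) : yy n K j * (yy n K 0 * uu n K) ∈ BI n K := by
  obtain ⟨p, hp, q, hq, hpq⟩ := Submodule.mem_sup.1 (y_uu (n := n) (K := K) j)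
  obtain ⟨e, rfl⟩ := Ideal.mem_span_singleton'.1 hq
  obtain ⟨a, ha, b, hb, rfl⟩ := Submodule.mem_sup.1 hp
  obtain ⟨d, rfl⟩ := Ideal.mem_span_singleton'.1 hb
  have : yy n K j * (yy n K 0 * uu n K) = yy n K 0 * a + d * (yy n K 0 * dl n K) +
    e * (cc n K * yy n K 0) := by linear_combination -(yy n K 0) * hpq
  rw [this]
  exact add_mem (add_mem (Ideal.mem_sup_left (Ideal.mul_mem_left _ _ ha))
    (Ideal.mem_sup_left (Ideal.mem_sup_left (Ideal.mul_mem_left _ _ (yy_dl 0)))))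
    (Ideal.mul_mem_left _ _ cy_mem)

lemma c_e : cc n K * (yy n K 0 * uu n K) ∈ BI n K := by
  rw [← mul_assoc]; exact Ideal.mul_mem_right _ _ cy_mem

lemma x_e (a) : xx n K a * (yy n K 0 * uu n K) ∈ BI n K := by
  have h1 : (xx n K a - (F1 n K a - F2 n K a * cc n K + if a = ci n then cc n K else 0)) ∈
    BI n K := Ideal.mem_sup_left (Ideal.mem_sup_right (xx_mod a))
  have h2 : (F1 n K a - F2 n K a * cc n K + if a = ci n then cc n K else 0) *
      (yy n K 0 * uu n K) ∈ BI n K := by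
    rw [add_mul, sub_mul]
    refine add_mem (sub_mem ?_ ?_) ?_
    · unfold F1; split_ifs
      · exact y_e _
      · rw [zero_mul]; exact zero_mem _
    · rw [mul_assoc]; exact Ideal.mul_mem_left _ _ c_e
    · split_ifs
      · exact c_e
      · rw [zero_mul]; exact zero_mem _
  have := add_mem (Ideal.mul_mem_right (yy n K 0 * uu n K) _ h1) h2
  convert this using 1; ring

lemma e_not_mem : yy n K 0 * uu n K ∉ BI n K := by
  intro h
  obtain ⟨p, hp, q, hq, hpq⟩ := Submodule.mem_sup.1 h
  obtain ⟨a, rfl⟩ := Ideal.mem_span_singleton'.1 hq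
  have h1 : yy n K 0 * (uu n K - cc n K * a) ∈ IT n K := by
    have := add_mem hp (Ideal.mul_mem_left _ a (hl_mod (n := n) (K := K)))
    convert this using 1
    linear_combination -hpq
  have h2 := colon _ (chain _ h1)
  have h3 : uu n K ∈ IT n K ⊔ Ideal.span {dl n K} ⊔ Ideal.span {cc n K} := by
    have := Submodule.add_mem_sup h2 (Ideal.mul_mem_left _ a (Ideal.mem_span_singleton_self (cc n K)))
    convert this using 1; ring
  rw [mem_ITcd, prod_eq, ysq_eq] at h3
  apply socle_not_mem (K := K) (Finset.univ.image (Sum.inr : Fin n → Sg n)) (Sum.inr 0) (by simp)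
  convert h3 using 1
  rw [uu, map_prod]
  simp only [piS_yy]
  have : (Finset.univ.image (Sum.inr : Fin n → Sg n)).erase (Sum.inr 0) =
    (Finset.univ.erase 0).image Sum.inr := by
    ext x; cases x <;> simp
  rw [this, Finset.prod_image (by intro a _ b _ h; exact Sum.inr_injective h)]
  rfl

/-- the maximal ideal -/
noncomputable abbrev mm (n : ℕ) (K : Type*) [Field K] : Ideal (Rg n K) :=
  Ideal.span (Set.range (X : Sg n → Rg n K))

lemma mem_mm_of_cc {σ : Type*} (f : MvPolynomial σ K) (h : constantCoeff f = 0) :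
    f ∈ Ideal.span (Set.range (X : σ → MvPolynomial σ K)) := by
  rw [← Set.image_univ, mem_ideal_span_X_image]
  intro m hm
  by_contra hcon
  push Not at hcon
  have : m = 0 := by ext i; simpa using hcon i
  subst this
  exact (mem_support_iff.1 hm) h

lemma e_socle (a) (ha : a ∈ mm n K) : a * (yy n K 0 * uu n K) ∈ BI n K := by
  have : mm n K ≤ Submodule.comap (LinearMap.mulRight _ (yy n K 0 * uu n K)) (BI n K) := by
    rw [Ideal.span_le]
    rintro _ ⟨s | s, rfl⟩
    · exact x_e s
    · exact y_e s
  exact this ha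

lemma ofList_main : Ideal.ofList (ths n K ++ (cc n K :: ys n K)) = mm n K := by
  apply le_antisymm
  · apply Ideal.span_le.2
    intro a ha
    apply mem_mm_of_cc
    simp only [List.mem_cons, List.mem_append, Set.mem_ofPred_eq] at ha
    rcases ha with ha | rfl | ha
    · exact (HM_ths a ha).2
    · exact HM_cc.2
    · exact (HM_ys a ha).2
  · rw [Ideal.ofList_append, Ideal.ofList_cons, ofList_ths, ys, ofList_map]
    set A := TI n K ⊔ (Ideal.span {cc n K} ⊔ Ideal.span (Set.range (yy n K)))
    have hc : cc n K ∈ A := 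
      Ideal.mem_sup_right (Ideal.mem_sup_left (Ideal.mem_span_singleton_self _))
    have hy : ∀ j, yy n K j ∈ A := fun j => 
      Ideal.mem_sup_right (Ideal.mem_sup_right (Ideal.subset_span ⟨j, rfl⟩))
    apply Ideal.span_le.2
    rintro _ ⟨s | s, rfl⟩
    · have h1 : (xx n K s - (F1 n K s - F2 n K s * cc n K + if s = ci n then cc n K else 0)) ∈ A :=
        Ideal.mem_sup_left (xx_mod s)
      have h2 : (F1 n K s - F2 n K s * cc n K + if s = ci n then cc n K else 0) ∈ A := by
        refine add_mem (sub_mem ?_ (Ideal.mul_mem_left _ _ hc)) ?_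
        · unfold F1; split_ifs
          · exact hy _
          · exact zero_mem _
        · split_ifs
          · exact hc
          · exact zero_mem _
      have := add_mem h1 h2
      rw [sub_add_cancel] at this
      exact this
    · exact hy s

lemma length_ths : (ths n K).length = n ^ 2 + n - 1 := by
  rw [ths, List.length_map, Finset.length_toList, Finset.card_univ, Fintype.card_subtype_compl]
  simp [Fintype.card_prod]
  congr 1; ring
lemma length_ys : (ys n K).length = n := by
  rw [ys, List.length_map, Finset.length_toList, Finset.card_univ, Fintype.card_fin]

end conc
end RJ


namespace RJ
universe u
section E
open RingTheory.Sequence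

/-- `rs` is weakly regular on `M` and `M ⧸ rs M` has a nonzero element killed by `m` -/
def QQ {R : Type u} [CommRing R] (m : Ideal R) :
    List R → (M : Type u) → [AddCommGroup M] → [Module R M] → Prop
  | [], M, _, _ => ∃ e : M, e ≠ 0 ∧ ∀ a ∈ m, a • e = 0
  | r :: rs, M, _, _ => IsSMulRegular M r ∧ QQ m rs (QuotSMulTop r M)

variable {R : Type u} [CommRing R] {m : Ideal R}

lemma QQ.wr (rs : List R) : ∀ (M : Type u) [AddCommGroup M] [Module R M], QQ m rs M →
    IsWeaklyRegular M rs := by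
  induction rs with
  | nil => intros; simp
  | cons r rs ih =>
    intro M _ _ h
    rw [isWeaklyRegular_cons_iff]
    exact ⟨h.1, ih _ h.2⟩

lemma QQ.nontrivial (rs : List R) : ∀ (M : Type u) [AddCommGroup M] [Module R M], QQ m rs M →
    Nontrivial M := by
  induction rs with
  | nil => intro M _ _ ⟨e, he, _⟩; exact ⟨⟨e, 0, he⟩⟩
  | cons r rs ih =>
    intro M _ _ h
    have := ih _ h.2
    exact (Submodule.Quotient.mk_surjective _ : Function.Surjective
      (Submodule.Quotient.mk : M → QuotSMulTop r M)).nontrivial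

lemma mem_cons_iff (r : R) (rs : List R) (M : Type u) [AddCommGroup M] [Module R M] (x : M) :
    x ∈ (Ideal.ofList (r :: rs) • ⊤ : Submodule R M) ↔
      (Submodule.Quotient.mk x : QuotSMulTop r M) ∈
        (Ideal.ofList rs • ⊤ : Submodule R (QuotSMulTop r M)) := by
  have : (Ideal.ofList rs • ⊤ : Submodule R (QuotSMulTop r M)) =
      (Ideal.ofList rs • ⊤ : Submodule R M).map (Submodule.mkQ _) := by
    rw [Submodule.map_smul'', Submodule.map_top, Submodule.range_mkQ]
  rw [this, ← Submodule.mkQ_apply, ← Submodule.mem_comap, Submodule.comap_map_mkQ,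
    Ideal.ofList_cons, Submodule.sup_smul, Submodule.ideal_span_singleton_smul]

lemma QQ.mk (rs : List R) : ∀ (M : Type u) [AddCommGroup M] [Module R M]
    (_ : IsWeaklyRegular M rs) (e : M) (_ : e ∉ (Ideal.ofList rs • ⊤ : Submodule R M))
    (_ : ∀ a ∈ m, a • e ∈ (Ideal.ofList rs • ⊤ : Submodule R M)), QQ m rs M := by
  induction rs with
  | nil =>
    intro M _ _ _ e h1 h2
    simp at h1 h2
    exact ⟨e, h1, h2⟩
  | cons r rs ih =>
    intro M _ _ hw e h1 h2
    rw [isWeaklyRegular_cons_iff] at hw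
    refine ⟨hw.1, ih _ hw.2 (Submodule.Quotient.mk e) ?_ ?_⟩
    · rwa [← mem_cons_iff]
    · intro a ha
      rw [← Submodule.Quotient.mk_smul, ← mem_cons_iff]
      exact h2 a ha

lemma map_inj {Z F M : Type u} [AddCommGroup Z] [Module R Z] [AddCommGroup F] [Module R F]
    [AddCommGroup M] [Module R M] (i : Z →ₗ[R] F) (p : F →ₗ[R] M) (hi : Function.Injective i)
    (hip : Function.Exact i p) (r : R) (hr : IsSMulRegular M r) :
    Function.Injective (QuotSMulTop.map r i) := by
  have h0 : Function.Exact (0 : Z →ₗ[R] Z) i := by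
    rw [LinearMap.exact_zero_iff_injective]; exact hi
  have := QuotSMulTop.map_first_exact_on_four_term_exact_of_isSMulRegular_last h0 hip hr
  rw [map_zero, LinearMap.exact_zero_iff_injective] at this
  exact this

lemma QQ.syz {x : R} (hx : x ∈ m) (rs : List R) : ∀ (Z F M : Type u) [AddCommGroup Z] [Module R Z]
    [AddCommGroup F] [Module R F]
    [AddCommGroup M] [Module R M] (i : Z →ₗ[R] F) (p : F →ₗ[R] M) (_ : Function.Injective i)
    (_ : Function.Exact i p) (_ : Function.Surjective p) (_ : IsWeaklyRegular F (rs ++ [x]))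
    (_ : QQ m rs M), QQ m (rs ++ [x]) Z := by
  induction rs with
  | nil =>
    intro Z F M _ _ _ _ _ _ i p hi hip hp hF hM
    obtain ⟨e, he, hme⟩ := hM
    obtain ⟨e, rfl⟩ := hp e
    simp only [List.nil_append, isWeaklyRegular_singleton_iff] at hF
    have hl : ∀ a ∈ m, ∃ z, i z = a • e := fun a ha => (hip _).1 (by rw [map_smul, hme a ha])
    obtain ⟨z, hz⟩ := hl x hx
    refine ⟨hF.of_injective i hi, Submodule.Quotient.mk z, ?_, ?_⟩
    · intro h
      rw [Submodule.Quotient.mk_eq_zero, Submodule.mem_smul_pointwise_iff_exists] at h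
      obtain ⟨w, -, hw⟩ := h
      have : x • i w = x • e := by rw [← hz, ← hw, map_smul]
      have h2 := hF this
      apply he
      rw [← h2]
      exact (hip _).2 ⟨w, rfl⟩
    · intro a ha
      rw [← Submodule.Quotient.mk_smul, Submodule.Quotient.mk_eq_zero,
        Submodule.mem_smul_pointwise_iff_exists]
      obtain ⟨w, hw⟩ := hl a ha
      refine ⟨w, trivial, hi ?_⟩
      rw [map_smul, map_smul, hw, hz, smul_comm]
  | cons r rs ih =>
    intro Z F M _ _ _ _ _ _ i p hi hip hp hF hM
    rw [List.cons_append, isWeaklyRegular_cons_iff] at hF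
    exact ⟨hF.1.of_injective i hi, ih _ _ _ (QuotSMulTop.map r i) (QuotSMulTop.map r p)
      (map_inj i p hi hip r hM.1) (QuotSMulTop.map_exact r hip hp)
      (QuotSMulTop.map_surjective r hp) hF.2 hM.2⟩

lemma wr_free {rs : List R} (h : IsWeaklyRegular R rs) (b : ℕ) : IsWeaklyRegular (Fin b → R) rs :=
  ((TensorProduct.rid R (Fin b → R)).isWeaklyRegular_congr rs).1
    (h.isWeaklyRegular_lTensor (M₂ := Fin b → R))

lemma pure_sub {rs : List R} {Z F M : Type u} [AddCommGroup Z] [Module R Z]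
    [AddCommGroup F] [Module R F]
    [AddCommGroup M] [Module R M] (i : Z →ₗ[R] F) (p : F →ₗ[R] M) (hi : Function.Injective i)
    (hip : Function.Exact i p) (hp : Function.Surjective p) (hM : IsWeaklyRegular M rs) (z : Z)
    (hz : i z ∈ (Ideal.ofList rs • ⊤ : Submodule R F)) :
    z ∈ (Ideal.ofList rs • ⊤ : Submodule R Z) := by
  have h0 : Function.Exact (0 : Z →ₗ[R] Z) i := by
    rw [LinearMap.exact_zero_iff_injective]; exact hi
  have := map_first_exact_on_four_term_right_exact_of_isSMulRegular_last h0 hip hp hM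
  obtain ⟨w, hw⟩ := (this (Submodule.Quotient.mk z)).1 (by
    rw [Submodule.mapQ_apply, Submodule.Quotient.mk_eq_zero]; exact hz)
  obtain ⟨w, rfl⟩ := Submodule.Quotient.mk_surjective _ w
  rw [Submodule.mapQ_apply, LinearMap.zero_apply, Submodule.Quotient.mk_zero] at hw
  rw [← Submodule.Quotient.mk_eq_zero]
  exact hw.symm

lemma free_zero (hm : (1 : R) ∉ m) (b : ℕ) (h : (⊤ : Submodule R (Fin b → R)) ≤ m • ⊤) :
    b = 0 := by
  rcases b with _ | b
  · rfl
  exfalso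
  apply hm
  have h1 := h (Submodule.mem_top (x := Pi.single (0 : Fin (b + 1)) (1 : R)))
  have h2 : (m • ⊤ : Submodule R (Fin (b + 1) → R)) ≤
      Submodule.comap (LinearMap.proj (0 : Fin (b + 1))) m := by
    rw [Submodule.smul_le]
    intro r hr v _
    exact Ideal.mul_mem_right _ _ hr
  simpa using h2 h1

lemma range_exact {A B C : Type u} [AddCommGroup A] [Module R A]
    [AddCommGroup B] [Module R B]
    [AddCommGroup C] [Module R C] (f : A →ₗ[R] B) (g : B →ₗ[R] C) 
    (h : LinearMap.ker g = LinearMap.range f) :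
    Function.Exact (LinearMap.range f).subtype g.rangeRestrict := by
  rw [LinearMap.exact_iff, Submodule.range_subtype, LinearMap.ker_rangeRestrict, h]

theorem res_length [IsDomain R] [IsNoetherianRing R] (hm : (1 : R) ∉ m) (rs zs : List R) (N : ℕ)
    (hN : zs.length = N + 1) (hw : IsWeaklyRegular R (rs ++ zs)) (hof : Ideal.ofList (rs ++ zs) = m)
    (M : Type u) [AddCommGroup M] [Module R M] (hQ : QQ m rs M) (β : ℕ → ℕ)
    (h : IsMinimalFreeRes m M β) : β (N + 1) ≠ 0 ∧ ∀ i, N + 1 < i → β i = 0 := by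
  obtain ⟨f, ε, h1, h2, h3, h4⟩ := h
  have hwt : ∀ k, IsWeaklyRegular R (rs ++ zs.take k) := by
    intro k
    rw [← List.take_append_drop k zs, ← List.append_assoc, isWeaklyRegular_append_iff] at hw
    exact hw.1
  have hmem : ∀ z ∈ zs, z ∈ m := by
    intro z hz
    rw [← hof]
    exact Ideal.subset_span (by simp [hz])
  have htk : ∀ k (hk : k < zs.length), rs ++ zs.take (k + 1) = (rs ++ zs.take k) ++ [zs[k]] := by
    intro k hk
    rw [List.take_succ_eq_append_getElem hk, List.append_assoc]
  have key : ∀ k ≤ N, QQ m (rs ++ zs.take (k + 1)) (LinearMap.range (f k)) := by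
    intro k
    induction k with
    | zero =>
      intro hk
      have hk' : 0 < zs.length := by omega
      rw [htk 0 hk']
      apply QQ.syz (hmem _ (List.getElem_mem _)) _ _ _ M (LinearMap.range (f 0)).subtype ε
        (Submodule.subtype_injective _) _ h1
      · rw [← htk 0 hk']
        exact wr_free (hwt _) _
      · simpa using hQ
      · rw [LinearMap.exact_iff, Submodule.range_subtype, h2]
    | succ k ih =>
      intro hk
      have hk' : k + 1 < zs.length := by omega
      rw [htk _ hk']
      apply QQ.syz (hmem _ (List.getElem_mem _)) _ _ _ _ (LinearMap.range (f (k + 1))).subtype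
        (f k).rangeRestrict
        (Submodule.subtype_injective _) (range_exact _ _ (h3 k)) (LinearMap.surjective_rangeRestrict _)
      · rw [← htk _ hk']
        exact wr_free (hwt _) _
      · exact ih (by omega)
  have hlast := key N le_rfl
  rw [List.take_of_length_le hN.le] at hlast
  have hnt := hlast.nontrivial
  have hzero : ∀ i, f i = 0 → β (i + 1) = 0 := by
    intro i hi
    apply free_zero hm
    refine le_trans ?_ (h4 (i + 1))
    rw [← h3 i, hi, LinearMap.ker_zero]
  refine ⟨?_, ?_⟩
  · intro hb
    have : IsEmpty (Fin (β (N + 1))) := by rw [hb]; infer_instance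
    obtain ⟨⟨x, hx⟩, hne⟩ := exists_ne (0 : LinearMap.range (f N))
    apply hne
    obtain ⟨y, rfl⟩ := hx
    ext1
    have : y = 0 := Subsingleton.elim _ _
    simp [this]
  · have hf : f (N + 1) = 0 := by
      rw [← LinearMap.range_eq_bot]
      set C := LinearMap.range (f (N + 1)) with hC
      have hle : C ≤ m • C := by
        intro c hc
        have := pure_sub C.subtype (f N).rangeRestrict (Submodule.subtype_injective _)
          (range_exact _ _ (h3 N)) (LinearMap.surjective_rangeRestrict _) hlast.wr ⟨c, hc⟩
          (by rw [hof]; exact h4 _ hc)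
        rw [hof] at this
        have h5 := Submodule.mem_map_of_mem (f := C.subtype) this
        rw [Submodule.map_smul'', Submodule.map_top, Submodule.range_subtype] at h5
        exact h5
      obtain ⟨r, hr, hr0⟩ := Submodule.exists_sub_one_mem_and_smul_eq_zero_of_fg_of_le_smul m C
        (IsNoetherian.noetherian _) hle
      have hr' : r ≠ 0 := by
        rintro rfl
        apply hm
        have := neg_mem hr
        simpa using this
      rw [eq_bot_iff]
      intro c hc
      exact (smul_eq_zero.1 (hr0 c hc)).resolve_left hr'
    have : ∀ j, f (N + 1 + j) = 0 := by
      intro j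
      induction j with
      | zero => exact hf
      | succ j ih =>
        have hb := hzero _ ih
        have : IsEmpty (Fin (β (N + 1 + j + 1))) := by rw [hb]; infer_instance
        apply LinearMap.ext
        intro v
        exact Subsingleton.elim _ _
    intro i hi
    obtain ⟨j, rfl⟩ := Nat.exists_eq_add_of_lt hi
    exact hzero _ (this j)

end E
end RJ

open MvPolynomial Matrix
set_option linter.unusedSectionVars false
set_option linter.unusedSimpArgs false

namespace RJ
universe u
section C
open LinearMap RingTheory.Sequence CategoryTheory Abelian Limits IsSMulRegular

variable {R : Type u} [CommRing R] {m : Ideal R}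

lemma QQ.ext (rs : List R) : ∀ (M : ModuleCat.{u} R), QQ m rs M →
    (∀ i ≤ rs.length, Subsingleton (Ext (ModuleCat.of R (R ⧸ m)) M i)) → False := by
  induction rs with
  | nil =>
    intro M ⟨e, he, hme⟩ h
    have : Subsingleton (ModuleCat.of R (R ⧸ m) ⟶ M) :=
      Ext.addEquiv₀.subsingleton_congr.mp (h 0 le_rfl)
    have : Subsingleton ((R ⧸ m) →ₗ[R] M) := 
      (ModuleCat.homAddEquiv (M := ModuleCat.of R (R ⧸ m)) (N := M)).symm.subsingleton
    let φ : (R ⧸ m) →ₗ[R] M := Submodule.liftQ m (LinearMap.toSpanSingleton R M e) (by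
      intro a ha
      rw [LinearMap.mem_ker, LinearMap.toSpanSingleton_apply]; exact hme a ha)
    have h0 : φ = 0 := Subsingleton.elim _ _
    apply he
    have h1 : φ (Submodule.Quotient.mk 1) = e := by
      rw [Submodule.liftQ_apply, LinearMap.toSpanSingleton_apply, one_smul]
    rw [← h1, h0]; rfl
  | cons r rs ih =>
    intro M hQ h
    refine ih (ModuleCat.of R (QuotSMulTop r M)) hQ.2 ?_
    intro i hi
    have zero1 := AddCommGrpCat.isZero_of_iff_subsingleton.mpr (h i (by simp; omega))
    have zero2 := AddCommGrpCat.isZero_of_iff_subsingleton.mpr (h (i + 1) (by simp; omega))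
    exact AddCommGrpCat.subsingleton_of_isZero <| ShortComplex.Exact.isZero_of_both_zeros
        ((Ext.covariant_sequence_exact₃' _ hQ.1.smulShortComplex_shortExact) i (i + 1) rfl)
        (zero1.eq_zero_of_src _) (zero2.eq_zero_of_tgt _)

theorem depth_le [IsNoetherianRing R] (M : Type u) [AddCommGroup M] [Module R M]
    [Module.Finite R M] (hM : m • (⊤ : Submodule R M) ≠ ⊤) (rs : List R) (hQ : QQ m rs M)
    (ts : List R) (hts : ∀ t ∈ ts, t ∈ m) (hw : IsWeaklyRegular M ts) : ts.length ≤ rs.length := by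
  by_contra hcon
  push Not at hcon
  have hreg : IsRegular M ts := by
    rw [isRegular_iff]
    refine ⟨hw, fun h => hM ?_⟩
    have hle : Ideal.ofList ts ≤ m := Ideal.span_le.2 hts
    have h2 : Ideal.ofList ts • (⊤ : Submodule R M) ≤ m • ⊤ := Submodule.smul_mono_left hle
    rw [← h] at h2
    exact top_le_iff.1 h2
  have := ModuleCat.subsingleton_ext_of_exists_isRegular m (ModuleCat.of R (R ⧸ m)) (by
    rw [Module.support_eq_zeroLocus, Ideal.annihilator_quotient]) (ModuleCat.of R M)
    hM.lt_top ts hts hreg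
  exact hQ.ext rs (ModuleCat.of R M) fun i hi => this i (by omega)

end C
end RJ

open MvPolynomial Matrix
set_option linter.unusedSectionVars false
set_option linter.unusedSimpArgs false

namespace RJ
section D
variable {σ K : Type*} [Field K]

/-- shifted homogeneous component -/
noncomputable def hcs (k e : ℕ) : MvPolynomial σ K →ₗ[K] MvPolynomial σ K :=
  if k ≤ e then homogeneousComponent (e - k) else 0

/-- projection of a shifted free module onto its degree `e` part -/
noncomputable def pr {b : ℕ} (d : Fin b → ℕ) (e : ℕ) (v : Fin b → MvPolynomial σ K) :
    Fin b → MvPolynomial σ K := fun i => hcs (d i) e (v i)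

/-- homogeneous elements of a shifted free module -/
def IsH {b : ℕ} (d : Fin b → ℕ) (D : ℕ) (v : Fin b → MvPolynomial σ K) : Prop :=
  ∀ i, (d i ≤ D ∧ (v i).IsHomogeneous (D - d i)) ∨ v i = 0

/-- graded submodules of a shifted free module -/
def Gr {b : ℕ} (d : Fin b → ℕ) (N : Submodule (MvPolynomial σ K) (Fin b → MvPolynomial σ K)) :
    Prop := ∀ v ∈ N, ∀ e, pr d e v ∈ N

lemma pr_isH {b : ℕ} (d : Fin b → ℕ) (e : ℕ) (v : Fin b → MvPolynomial σ K) :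
    IsH d e (pr d e v) := by
  intro i
  simp only [pr, hcs]
  split_ifs with h
  · exact Or.inl ⟨h, homogeneousComponent_isHomogeneous _ _⟩
  · exact Or.inr rfl

lemma hc_mul_hom (c v : MvPolynomial σ K) (k e : ℕ) (hv : v.IsHomogeneous k) :
    homogeneousComponent e (c * v) = hcs k e c * v := by
  rw [hc_mul, hcs]
  split_ifs with h
  · rw [Finset.sum_eq_single (e - k, k)]
    · simp only
      rw [homogeneousComponent_of_mem hv, if_pos rfl]
    · rintro ⟨p, q⟩ hp hne
      rw [Finset.HasAntidiagonal.mem_antidiagonal] at hp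
      simp only at hp ⊢
      rw [homogeneousComponent_of_mem hv, if_neg, mul_zero]
      rintro rfl
      apply hne
      rw [← hp]; simp
    · intro hh
      exfalso; apply hh
      rw [Finset.HasAntidiagonal.mem_antidiagonal]
      simp only; omega
  · rw [LinearMap.zero_apply, zero_mul]
    refine Finset.sum_eq_zero ?_
    rintro ⟨p, q⟩ hp
    rw [Finset.HasAntidiagonal.mem_antidiagonal] at hp
    simp only at hp ⊢
    rw [homogeneousComponent_of_mem hv, if_neg, mul_zero]
    omega

lemma pr_smul {b : ℕ} (d : Fin b → ℕ) (D e : ℕ) (c : MvPolynomial σ K)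
    (v : Fin b → MvPolynomial σ K) (hv : IsH d D v) : pr d e (c • v) = hcs D e c • v := by
  funext i
  simp only [pr, Pi.smul_apply, smul_eq_mul]
  rcases hv i with ⟨h1, h2⟩ | h
  · by_cases h3 : d i ≤ e
    · have : hcs (d i) e (c * v i) = homogeneousComponent (e - d i) (c * v i) := by
        rw [hcs, if_pos h3]
      rw [this, hc_mul_hom _ _ _ _ h2]
      congr 1
      simp only [hcs]
      by_cases h4 : D ≤ e
      · rw [if_pos h4, if_pos (by omega)]
        congr 2; omega
      · rw [if_neg h4, if_neg (by omega)]
    · simp only [hcs]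
      rw [if_neg h3, if_neg (by omega)]; simp
  · rw [h, mul_zero, mul_zero, map_zero]

lemma pr_sum {b : ℕ} (d : Fin b → ℕ) (e : ℕ) {ι : Type*} (s : Finset ι)
    (v : ι → Fin b → MvPolynomial σ K) : pr d e (∑ i ∈ s, v i) = ∑ i ∈ s, pr d e (v i) := by
  funext i
  simp only [pr, Finset.sum_apply, map_sum]

lemma exists_sum_pr {b : ℕ} (d : Fin b → ℕ) (v : Fin b → MvPolynomial σ K) :
    ∃ B, v = ∑ e ∈ Finset.range B, pr d e v := by
  refine ⟨∑ i, (d i + (v i).totalDegree + 1), ?_⟩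
  funext i
  rw [Finset.sum_apply]
  simp only [pr]
  set B := ∑ i, (d i + (v i).totalDegree + 1) with hB
  have hle : d i + (v i).totalDegree + 1 ≤ B :=
    Finset.single_le_sum (f := fun i => d i + (v i).totalDegree + 1)
      (fun _ _ => Nat.zero_le _) (Finset.mem_univ i)
  obtain ⟨t, ht⟩ := Nat.exists_eq_add_of_le hle
  rw [ht, add_assoc (d i), add_assoc (d i), Finset.sum_range_add]
  rw [Finset.sum_eq_zero, zero_add, Finset.sum_range_add]
  · rw [Finset.sum_eq_zero (s := Finset.range t), add_zero]
    · conv_lhs => rw [← sum_homogeneousComponent (v i)]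
      refine Finset.sum_congr rfl fun x _ => ?_
      rw [hcs, if_pos (by omega)]; simp
    · intro x _
      rw [hcs, if_pos (by omega)]
      exact homogeneousComponent_eq_zero _ _ (by omega)
  · intro x hx
    rw [Finset.mem_range] at hx
    rw [hcs, if_neg (by omega)]; rfl

variable [Finite σ]

lemma exists_gens {b : ℕ} (d : Fin b → ℕ)
    (N : Submodule (MvPolynomial σ K) (Fin b → MvPolynomial σ K)) (hN : Gr d N) :
    ∃ c, ∃ v : Fin c → (Fin b → MvPolynomial σ K), (∀ k, ∃ D, IsH d D (v k)) ∧
      Submodule.span (MvPolynomial σ K) (Set.range v) = N := by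
  have h1 : Submodule.span (MvPolynomial σ K) {v | v ∈ N ∧ ∃ D, IsH d D v} = N := by
    apply le_antisymm
    · rw [Submodule.span_le]; exact fun v hv => hv.1
    · intro v hv
      obtain ⟨B, hB⟩ := exists_sum_pr d v
      rw [hB]
      exact Submodule.sum_mem _ fun e _ => Submodule.subset_span ⟨hN v hv e, e, pr_isH d e v⟩
  have h2 : (Submodule.span (MvPolynomial σ K) {v | v ∈ N ∧ ∃ D, IsH d D v}).FG :=
    IsNoetherian.noetherian _
  obtain ⟨T, hT, hT2⟩ := Submodule.fg_span_iff_fg_span_finset_subset _ |>.1 h2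
  refine ⟨T.card, fun k => (T.equivFin.symm k : _), fun k => (hT (T.equivFin.symm k).2).2, ?_⟩
  rw [← h1, hT2]
  congr 1
  ext x
  constructor
  · rintro ⟨k, rfl⟩; exact (T.equivFin.symm k).2
  · intro hx
    exact ⟨T.equivFin ⟨x, hx⟩, by simp⟩

lemma exists_step (m : Ideal (MvPolynomial σ K)) (hm : ∀ f, constantCoeff f = 0 → f ∈ m)
    {b : ℕ} (d : Fin b → ℕ)
    (N : Submodule (MvPolynomial σ K) (Fin b → MvPolynomial σ K)) (hN : Gr d N) :
    ∃ c, ∃ d' : Fin c → ℕ,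
      ∃ φ : (Fin c → MvPolynomial σ K) →ₗ[MvPolynomial σ K] (Fin b → MvPolynomial σ K),
      LinearMap.range φ = N ∧ Gr d' (LinearMap.ker φ) ∧ LinearMap.ker φ ≤ m • ⊤ := by
  classical
  have hex := exists_gens d N hN
  obtain ⟨c, hc⟩ : ∃ c, c = Nat.find hex := ⟨_, rfl⟩
  obtain ⟨v, hv, hspan⟩ := Nat.find_spec hex
  have hmin := fun k (hk : k < Nat.find hex) => Nat.find_min hex hk
  rw [← hc] at hmin
  revert v
  rw [← hc]
  intro v hv hspan
  choose D hD using hv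
  have hcomm : ∀ (a : Fin c → MvPolynomial σ K) e,
      pr d e (Fintype.linearCombination (MvPolynomial σ K) v a) =
        Fintype.linearCombination (MvPolynomial σ K) v (pr D e a) := by
    intro a e
    rw [Fintype.linearCombination_apply, Fintype.linearCombination_apply, pr_sum]
    refine Finset.sum_congr rfl fun k _ => ?_
    rw [pr_smul d (D k) e _ _ (hD k)]; rfl
  have hgr : Gr D (LinearMap.ker (Fintype.linearCombination (MvPolynomial σ K) v)) := by
    intro a ha e
    rw [LinearMap.mem_ker] at ha ⊢
    rw [← hcomm, ha]
    funext i; simp [pr]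
  refine ⟨c, D, Fintype.linearCombination (MvPolynomial σ K) v, ?_, hgr, ?_⟩
  · rw [Fintype.range_linearCombination, hspan]
  · intro a ha
    have hcoef : ∀ k, a k ∈ m := by
      intro k
      apply hm
      by_contra hk
      have h1 := hgr a ha (D k)
      rw [LinearMap.mem_ker, Fintype.linearCombination_apply] at h1
      have hkk : pr D (D k) a k = C (constantCoeff (a k)) := by
        simp only [pr, hcs, le_refl, if_true, Nat.sub_self, homogeneousComponent_zero]; rfl
      rcases c with _ | c
      · exact k.elim0
      · rw [Fin.sum_univ_succAbove _ k, hkk] at h1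
        refine hmin c (Nat.lt_succ_self c) ⟨fun j => v (k.succAbove j), fun j => ⟨_, hD _⟩, ?_⟩
        apply le_antisymm
        · rw [← hspan]
          exact Submodule.span_mono (by rintro _ ⟨j, rfl⟩; exact ⟨_, rfl⟩)
        · rw [← hspan, Submodule.span_le]
          have hvk : v k ∈ Submodule.span (MvPolynomial σ K)
              (Set.range fun j => v (k.succAbove j)) := by
            have h2 : (C (constantCoeff (a k)) : MvPolynomial σ K) • v k ∈ Submodule.span (MvPolynomial σ K)
              (Set.range fun j => v (k.succAbove j)) := by
              rw [eq_neg_of_add_eq_zero_left h1]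
              exact neg_mem (Submodule.sum_mem _ fun j _ =>
                Submodule.smul_mem _ _ (Submodule.subset_span ⟨j, rfl⟩))
            have h3 := Submodule.smul_mem _ (C (constantCoeff (a k))⁻¹) h2
            rwa [smul_smul, ← C_mul, inv_mul_cancel₀ hk, C_1, one_smul] at h3
          rintro _ ⟨j, rfl⟩
          rcases Fin.eq_self_or_eq_succAbove k j with rfl | ⟨j, rfl⟩
          · exact hvk
          · exact Submodule.subset_span ⟨j, rfl⟩
    have : a = ∑ k, a k • (Pi.single k 1 : Fin c → MvPolynomial σ K) := by
      funext i
      simp [Finset.sum_apply, Pi.single_apply]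
    rw [this]
    exact Submodule.sum_mem _ fun k _ => Submodule.smul_mem_smul (hcoef k) trivial

/-- states of the recursive construction of the resolution -/
structure St (m : Ideal (MvPolynomial σ K)) where
  b : ℕ
  d : Fin b → ℕ
  N : Submodule (MvPolynomial σ K) (Fin b → MvPolynomial σ K)
  gr : Gr d N
  le : N ≤ m • ⊤

theorem exists_res (m : Ideal (MvPolynomial σ K)) (hm : ∀ f, constantCoeff f = 0 → f ∈ m)
    (J : Ideal (MvPolynomial σ K)) (hJ : Hom J) (hJm : J ≤ m) :
    ∃ β, IsMinimalFreeRes m (MvPolynomial σ K ⧸ J) β := by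
  have step : ∀ s : St m, ∃ t : St m,
      ∃ φ : (Fin t.b → MvPolynomial σ K) →ₗ[MvPolynomial σ K] (Fin s.b → MvPolynomial σ K),
        LinearMap.range φ = s.N ∧ LinearMap.ker φ = t.N := by
    intro s
    obtain ⟨c, d', φ, h1, h2, h3⟩ := exists_step m hm s.d s.N s.gr
    exact ⟨⟨c, d', LinearMap.ker φ, h2, h3⟩, φ, h1, rfl⟩
  choose nx φ hφ1 hφ2 using step
  let s0 : St m :=
    { b := 1
      d := fun _ => 0
      N := Submodule.comap (LinearMap.proj 0) J
      gr := by
        intro v hv e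
        rw [Submodule.mem_comap] at hv ⊢
        have : (LinearMap.proj 0 : (Fin 1 → MvPolynomial σ K) →ₗ[MvPolynomial σ K] _)
            (pr (fun _ => 0) e v) = homogeneousComponent e (v 0) := by
          simp [pr, hcs]
        rw [this]
        exact hJ _ hv e
      le := by
        intro v hv
        have : v = v 0 • (1 : Fin 1 → MvPolynomial σ K) := by
          funext i; rw [Subsingleton.elim i 0]; simp
        rw [this]
        exact Submodule.smul_mem_smul (hJm hv) trivial }
  let s : ℕ → St m := fun i => Nat.rec s0 (fun _ t => nx t) i
  refine ⟨fun i => (s i).b, fun i => φ (s i), J.mkQ ∘ₗ LinearMap.proj (0 : Fin 1), ?_, ?_, ?_, ?_⟩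
  · intro x
    obtain ⟨r, rfl⟩ := Submodule.mkQ_surjective J x
    exact ⟨fun _ => r, rfl⟩
  · rw [hφ1, LinearMap.ker_comp, Submodule.ker_mkQ]; rfl
  · intro i
    rw [hφ1, hφ2]
  · intro i
    rw [hφ1]; exact (s i).le

end D
end RJ


namespace RJ
section F
open RingTheory.Sequence
variable {n : ℕ} [NeZero n] {K : Type*} [Field K]

lemma mem_ofList_smul_top {R : Type*} [CommRing R] (J A : Ideal R) (f : R) :
    (Ideal.Quotient.mk J f : R ⧸ J) ∈ (A • ⊤ : Submodule R (R ⧸ J)) ↔ f ∈ J ⊔ A := by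
  have h1 : (A • ⊤ : Submodule R (R ⧸ J)) = Submodule.map J.mkQ A := by
    rw [← Submodule.range_mkQ J, LinearMap.range_eq_map, ← Submodule.map_smul'']
    simp
  have h2 : Submodule.comap J.mkQ (Submodule.map J.mkQ A) = J ⊔ A := Submodule.comap_map_mkQ J A
  rw [h1, ← h2]; rfl

lemma gg_le : Ideal.span (Set.range (gg n K)) ≤ mm n K := by
  rw [Ideal.span_le]
  rintro _ ⟨i, rfl⟩
  exact mem_mm_of_cc _ (HM_gg i).2

lemma one_not_mem : (1 : Rg n K) ∉ mm n K := by
  intro h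
  have : mm n K ≤ RingHom.ker (constantCoeff : Rg n K →+* K) := by
    rw [Ideal.span_le]
    rintro _ ⟨i, rfl⟩
    simp
  have := this h
  simp at this

lemma wr_quot : IsWeaklyRegular (Rg n K ⧸ Ideal.span (Set.range (gg n K))) (ths n K) := by
  rw [← WR.iff, J_eq]; exact wr_J

lemma QQ_quot : QQ (mm n K) (ths n K) (Rg n K ⧸ Ideal.span (Set.range (gg n K))) := by
  refine QQ.mk _ _ wr_quot (Ideal.Quotient.mk _ (yy n K 0 * uu n K)) ?_ ?_
  · rw [mem_ofList_smul_top, BI_eq]; exact e_not_mem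
  · intro a ha
    have : a • (Ideal.Quotient.mk (Ideal.span (Set.range (gg n K))) (yy n K 0 * uu n K)) =
      Ideal.Quotient.mk _ (a * (yy n K 0 * uu n K)) := rfl
    rw [this, mem_ofList_smul_top, BI_eq]; exact e_socle a ha

lemma wr_R : IsWeaklyRegular (Rg n K) (ths n K ++ (cc n K :: ys n K)) :=
  ((Submodule.quotEquivOfEqBot (⊥ : Ideal (Rg n K)) rfl).isWeaklyRegular_congr _).1
    ((WR.iff _ _).1 wr_main)

lemma smul_top_ne : mm n K • (⊤ : Submodule (Rg n K)
    (Rg n K ⧸ Ideal.span (Set.range (gg n K)))) ≠ ⊤ := by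
  intro h
  have : (Ideal.Quotient.mk _ 1 : Rg n K ⧸ Ideal.span (Set.range (gg n K))) ∈
    (mm n K • ⊤ : Submodule (Rg n K) (Rg n K ⧸ Ideal.span (Set.range (gg n K)))) := by
    rw [h]; trivial
  rw [mem_ofList_smul_top, sup_eq_right.2 gg_le] at this
  exact one_not_mem this

theorem final_res : ∃ β : ℕ → ℕ, IsMinimalFreeRes (mm n K)
    (Rg n K ⧸ Ideal.span (Set.range (gg n K))) β ∧
    β (n + 1) ≠ 0 ∧ ∀ i, n + 1 < i → β i = 0 := by
  obtain ⟨β, hβ⟩ := exists_res (mm n K) mem_mm_of_cc (Ideal.span (Set.range (gg n K)))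
    (Hom.span _ (by rintro _ ⟨i, rfl⟩; exact (HM_gg _).1)) gg_le
  exact ⟨β, hβ, res_length one_not_mem (ths n K) (cc n K :: ys n K) n (by simp [length_ys])
    wr_R ofList_main _ QQ_quot β hβ⟩

theorem final_depth : moduleDepth (mm n K) (Rg n K ⧸ Ideal.span (Set.range (gg n K))) =
    ((n ^ 2 + n - 1 : ℕ) : ℕ∞) := by
  apply le_antisymm
  · apply sSup_le
    rintro _ ⟨ts, rfl, hts, hw⟩
    have := depth_le _ smul_top_ne _ QQ_quot ts hts hw
    rw [length_ths] at this
    exact_mod_cast this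
  · apply le_sSup
    exact ⟨ths n K, by rw [length_ths], fun a ha => mem_mm_of_cc _ (HM_ths a ha).2, wr_quot⟩

theorem final_dim : ((n ^ 2 + n : ℕ) : WithBot ℕ∞) ≤
    ringKrullDim (Rg n K ⧸ Ideal.span (Set.range (gg n K))) := by
  let φ : Rg n K →ₐ[K] MvPolynomial (Fin (n + 1) × Fin n) K := aeval (Sum.elim X (fun _ => 0))
  have hφ : Function.Surjective φ := by
    intro p
    refine ⟨rename Sum.inl p, ?_⟩
    simp only [φ, aeval_rename]
    change aeval (fun i => X i) p = p
    exact aeval_X_left_apply p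
  have hker : ∀ a ∈ Ideal.span (Set.range (gg n K)), φ.toRingHom a = 0 := by
    have : Ideal.span (Set.range (gg n K)) ≤ RingHom.ker φ.toRingHom := by
      rw [Ideal.span_le]
      rintro _ ⟨i, rfl⟩
      simp [gg, xx, yy, φ]
    exact fun a ha => this ha
  have h1 := ringKrullDim_le_of_surjective (Ideal.Quotient.lift _ φ.toRingHom hker)
    (Ideal.Quotient.lift_surjective_of_surjective _ _ hφ)
  refine le_trans ?_ h1
  have h2 := ringKrullDim_add_natCard_le_ringKrullDim_mvPolynomial (R := K) (Fin (n + 1) × Fin n)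
  rw [ringKrullDim_eq_zero_of_field, zero_add] at h2
  refine le_trans (le_of_eq ?_) h2
  rw [Nat.card_prod, Nat.card_eq_fintype_card, Nat.card_eq_fintype_card, Fintype.card_fin,
    Fintype.card_fin]
  congr 2; ring

end F
end RJ

/-- With `X̂` the generic `(n+1)×n` matrix and `J = I₁(X̂Y)`, one has
`projdim (R̂/J) = n+1`, `dim (R̂/J) ≥ n² + n`, `depth (R̂/J) = n² + n − 1 < dim (R̂/J)`;
in particular `R̂/J` is not Cohen–Macaulay. -/
theorem RhatJ_not_cohen_macaulay
    {K : Type*} [Field K] (n : ℕ) (hn : 1 ≤ n)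
    (Xv : Fin (n + 1) → Fin n → MvPolynomial ((Fin (n + 1) × Fin n) ⊕ Fin n) K)
    (yv : Fin n → MvPolynomial ((Fin (n + 1) × Fin n) ⊕ Fin n) K)
    (hX : ∀ i j, Xv i j = MvPolynomial.X (Sum.inl (i, j)))
    (hy : ∀ j, yv j = MvPolynomial.X (Sum.inr j))
    (g : Fin (n + 1) → MvPolynomial ((Fin (n + 1) × Fin n) ⊕ Fin n) K)
    (hg : ∀ i, g i = ∑ j, Xv i j * yv j) :
    (∃ β : ℕ → ℕ,
      IsMinimalFreeRes (Ideal.span (Set.range (MvPolynomial.X :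
          ((Fin (n + 1) × Fin n) ⊕ Fin n) → MvPolynomial ((Fin (n + 1) × Fin n) ⊕ Fin n) K)))
        (MvPolynomial ((Fin (n + 1) × Fin n) ⊕ Fin n) K ⧸ Ideal.span (Set.range g)) β ∧
      β (n + 1) ≠ 0 ∧ ∀ i, n + 1 < i → β i = 0) ∧
    ((n ^ 2 + n : ℕ) : WithBot ℕ∞) ≤
      ringKrullDim (MvPolynomial ((Fin (n + 1) × Fin n) ⊕ Fin n) K ⧸
        Ideal.span (Set.range g)) ∧
    moduleDepth (Ideal.span (Set.range (MvPolynomial.X :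
        ((Fin (n + 1) × Fin n) ⊕ Fin n) → MvPolynomial ((Fin (n + 1) × Fin n) ⊕ Fin n) K)))
      (MvPolynomial ((Fin (n + 1) × Fin n) ⊕ Fin n) K ⧸ Ideal.span (Set.range g)) =
      ((n ^ 2 + n - 1 : ℕ) : ℕ∞) ∧
    ((n ^ 2 + n - 1 : ℕ) : WithBot ℕ∞) <
      ringKrullDim (MvPolynomial ((Fin (n + 1) × Fin n) ⊕ Fin n) K ⧸
        Ideal.span (Set.range g)) := by
  have : NeZero n := ⟨by omega⟩
  have hgg : g = RJ.gg n K := by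
    funext i
    rw [hg, RJ.gg]
    exact Finset.sum_congr rfl fun j _ => by rw [hX, hy]; rfl
  subst hgg
  refine ⟨RJ.final_res, RJ.final_dim, RJ.final_depth, lt_of_lt_of_le ?_ RJ.final_dim⟩
  exact_mod_cast (by have := Nat.zero_le (n ^ 2); omega : n ^ 2 + n - 1 < n ^ 2 + n)
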